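/- Let Ω ⊂ ℂ be a bounded lemniscate domain, let z₀ ∈ Ω, set γ := ∂Ω, and let ε > 0. Then there exists δ > 0 such that: for every continuous injective map h : γ → ℂ with sup_{z ∈ γ} |h(z) − z| < δ, letting Ω_h be the connected component of ℂ \ h(γ) containing z₀, the normalized Riemann maps φ, φ_h : closure(𝔻) → ℂ (continuous on closure(𝔻), injective and holomorphic on 𝔻, with φ(𝔻) = Ω, φ_h(𝔻) = Ω_h, φ(0) = φ_h(0) = z₀, and φ′(0), φ_h′(0) real and positive) satisfy sup_{z ∈ closure(𝔻)} |φ(z) − φ_h(z)| < ε. -/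

import Mathlib

open Set Metric Topology Filter Polynomial

noncomputable section

/-- A Jordan curve: a set homeomorphic to the unit circle. -/
def IsJordanCurve {X : Type*} [TopologicalSpace X] (E : Set X) : Prop :=
  Nonempty (E ≃ₜ (Metric.sphere (0 : ℂ) 1 : Set ℂ))

/-- A simple arc: a set homeomorphic to the open unit interval `(0,1)`. -/
def IsSimpleArc {X : Type*} [TopologicalSpace X] (E : Set X) : Prop :=
  Nonempty (E ≃ₜ (Set.Ioo (0 : ℝ) 1 : Set ℝ))

/-- The connected components of a set. -/
def setComponents {X : Type*} [TopologicalSpace X] (A : Set X) : Set (Set X) :=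
  {C | ∃ x ∈ A, C = connectedComponentIn A x}

/-- The edges of the pair `(G, V)`: the connected components of `G \ V`. -/
def graphEdges {X : Type*} [TopologicalSpace X] (G V : Set X) : Set (Set X) :=
  setComponents (G \ V)

/-- The degree of a vertex `v`: the number of edges `e` with `v ∈ closure e \ e`,
where an edge is counted twice if `closure e \ e = {v}`. -/
def vertexDegree {X : Type*} [TopologicalSpace X] (G V : Set X) (v : X) : ℕ :=
  {e ∈ graphEdges G V | v ∈ closure e \ e}.ncard +
    {e ∈ graphEdges G V | closure e \ e = {v}}.ncard

/-- `G` is a lemniscate graph with (finite) vertex set `V`. -/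
structure IsLemniscateGraphWith {X : Type*} [TopologicalSpace X] (G V : Set X) : Prop where
  vertex_subset : V ⊆ G
  vertex_finite : V.Finite
  edges_finite : (graphEdges G V).Finite
  edge_shape : ∀ e ∈ graphEdges G V, IsJordanCurve e ∨ (IsSimpleArc e ∧ closure e \ e ⊆ V)
  degree_even : ∀ v ∈ V, Even (vertexDegree G V v)
  degree_ge_four : ∀ v ∈ V, 4 ≤ vertexDegree G V v

/-- `G` is a lemniscate graph (for some finite vertex set). -/
def IsLemniscateGraph {X : Type*} [TopologicalSpace X] (G : Set X) : Prop :=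
  ∃ V, IsLemniscateGraphWith G V

/-- The faces of `G`: the connected components of the complement of `G`. -/
def graphFaces {X : Type*} [TopologicalSpace X] (G : Set X) : Set (Set X) :=
  setComponents Gᶜ

/-- A 2-coloring of the faces of `G`, recorded by the set `grey` of grey faces:
two distinct faces whose closures share a common edge get different colors. -/
def IsTwoColoring {X : Type*} [TopologicalSpace X] (G V : Set X) (grey : Set (Set X)) : Prop :=
  grey ⊆ graphFaces G ∧
    ∀ F₁ ∈ graphFaces G, ∀ F₂ ∈ graphFaces G, F₁ ≠ F₂ →
      (∃ e ∈ graphEdges G V, e ⊆ closure F₁ ∧ e ⊆ closure F₂) →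
      (F₁ ∈ grey ↔ F₂ ∉ grey)

/-- The distance function of a metric space structure on the Riemann sphere. -/
def mdist (m : MetricSpace (OnePoint ℂ)) : OnePoint ℂ → OnePoint ℂ → ℝ :=
  m.toPseudoMetricSpace.toDist.dist

/-- The metric space structure `m` induces the standard topology of the Riemann sphere. -/
def InducesSphereTopology (m : MetricSpace (OnePoint ℂ)) : Prop :=
  m.toPseudoMetricSpace.toUniformSpace.toTopologicalSpace =
    (inferInstance : TopologicalSpace (OnePoint ℂ))

/-- `E` and `F` are `ε`-homeomorphic with respect to the metric `m`: there is a
homeomorphism of the sphere carrying `E` to `F` and moving points less than `ε`. -/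
def EpsHomeomorphic (m : MetricSpace (OnePoint ℂ)) (ε : ℝ) (E F : Set (OnePoint ℂ)) : Prop :=
  ∃ φ : OnePoint ℂ ≃ₜ OnePoint ℂ, φ '' E = F ∧ ∃ c < ε, ∀ z, mdist m (φ z) z ≤ c

/-- `r` is a rational map on the Riemann sphere: the continuous extension of `p/q`
for coprime polynomials `p`, `q`, not both constant. -/
def IsRationalMap (r : OnePoint ℂ → OnePoint ℂ) : Prop :=
  Continuous r ∧ ∃ p q : ℂ[X], IsCoprime p q ∧ ¬(p.natDegree = 0 ∧ q.natDegree = 0) ∧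
    ∀ z : ℂ, q.eval z ≠ 0 → r (z : OnePoint ℂ) = ((p.eval z / q.eval z : ℂ) : OnePoint ℂ)

/-- The lemniscate of `r` : the preimage of the unit circle. -/
def lemniscate (r : OnePoint ℂ → OnePoint ℂ) : Set (OnePoint ℂ) :=
  r ⁻¹' ((fun w : ℂ => (w : OnePoint ℂ)) '' {w : ℂ | ‖w‖ = 1})

/-- The copy of a planar set inside the Riemann sphere. -/
def toSphere (s : Set ℂ) : Set (OnePoint ℂ) := (fun z : ℂ => (z : OnePoint ℂ)) '' s


/-- A lemniscate domain: a simply connected open set whose boundary is a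
lemniscate graph. -/
def IsLemniscateDomain (Ω : Set ℂ) : Prop :=
  IsOpen Ω ∧ SimplyConnectedSpace Ω ∧ IsLemniscateGraph (frontier Ω)

/-- An injective holomorphic function on an open set has no critical points. -/
theorem deriv_ne_zero_of_injOn {f : ℂ → ℂ} {U : Set ℂ} (hU : IsOpen U)
    (hf : DifferentiableOn ℂ f U) (hinj : InjOn f U) {z : ℂ} (hz : z ∈ U) : deriv f z ≠ 0 := by
  intro hd
  have hUz : U ∈ 𝓝 z := hU.mem_nhds hz
  have han : AnalyticAt ℂ f z := hf.analyticAt hUz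
  have han' : AnalyticAt ℂ (fun x => f x - f z) z := han.sub analyticAt_const
  have hnc : ¬ ∀ᶠ x in 𝓝 z, f x - f z = 0 := by
    intro h
    have h1 : ∀ᶠ x in 𝓝[≠] z, f x - f z = 0 ∧ x ∈ U :=
      nhdsWithin_le_nhds (h.and hUz)
    obtain ⟨x, ⟨hx1, hx2⟩, hx3⟩ := (h1.and self_mem_nhdsWithin).exists
    exact hx3 (hinj hx2 hz (sub_eq_zero.1 hx1))
  obtain ⟨m, g, hg, hg0, hfg⟩ := (han'.exists_eventuallyEq_pow_smul_nonzero_iff).2 hnc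
  have hm0 : m ≠ 0 := by
    rintro rfl
    have := hfg.self_of_nhds
    simp at this
    exact hg0 this.symm
  have hm1 : m ≠ 1 := by
    rintro rfl
    have h1 : HasDerivAt (fun x => (x - z) ^ 1 • g x) (g z) z := by
      have := ((hasDerivAt_id z).sub_const z).mul hg.differentiableAt.hasDerivAt
      simpa [Pi.mul_def] using this
    have h2 : HasDerivAt (fun x => f x - f z) (g z) z := h1.congr_of_eventuallyEq hfg
    have h3 : HasDerivAt (fun x => f x - f z) 0 z := by
      simpa [hd] using (han.differentiableAt.hasDerivAt.sub_const (f z))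
    exact hg0 (h2.unique h3)
  obtain ⟨c, hc⟩ := IsAlgClosed.exists_pow_nat_eq (g z) (Nat.pos_of_ne_zero hm0)
  have hc0 : c ≠ 0 := by rintro rfl; simp [hm0] at hc; exact hg0 hc.symm
  set r : ℂ → ℂ := fun x => c * Complex.exp (Complex.log (g x / g z) / m) with hr
  have hslit : g z / g z ∈ Complex.slitPlane := by simp [div_self hg0]
  have hran : AnalyticAt ℂ r z := by
    have h1 : AnalyticAt ℂ (fun x => g x / g z) z := hg.div_const
    exact analyticAt_const.mul ((h1.clog hslit).div_const).cexp
  have hrm : ∀ᶠ x in 𝓝 z, r x ^ m = g x := by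
    filter_upwards [hg.continuousAt.eventually_ne hg0] with x hx
    rw [hr, mul_pow, hc, ← Complex.exp_nat_mul, mul_div_cancel₀ _ (by exact_mod_cast hm0),
      Complex.exp_log (div_ne_zero hx hg0), mul_div_cancel₀ _ hg0]
  have hr0 : r z ≠ 0 := by simp [hr, hc0]
  set u : ℂ → ℂ := fun x => (x - z) * r x with hu
  have huan : AnalyticAt ℂ u z := (analyticAt_id.sub analyticAt_const).mul hran
  have hud : HasDerivAt u (r z) z := by
    have := ((hasDerivAt_id z).sub_const z).mul hran.differentiableAt.hasDerivAt
    simpa [Pi.mul_def] using this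
  have hmap : Filter.map u (𝓝 z) = 𝓝 (u z) :=
    HasStrictDerivAt.map_nhds_eq (hud.deriv ▸ huan.hasStrictDerivAt) hr0
  have huz : u z = 0 := by simp [hu]
  have hfu : ∀ᶠ x in 𝓝 z, f x = f z + u x ^ m := by
    filter_upwards [hfg, hrm] with x hx hx'
    rw [hu, mul_pow, hx', ← smul_eq_mul, ← hx]; ring
  have hmem : u '' {x | f x = f z + u x ^ m ∧ x ∈ U} ∈ 𝓝 (0 : ℂ) := by
    rw [← huz, ← hmap]
    exact image_mem_map (hfu.and hUz)
  set ω : ℂ := Complex.exp (2 * Real.pi * Complex.I / m)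
  have hω : IsPrimitiveRoot ω m := Complex.isPrimitiveRoot_exp m hm0
  have hmem2 : ∀ᶠ t in 𝓝 (0 : ℂ), ω * t ∈ u '' {x | f x = f z + u x ^ m ∧ x ∈ U} := by
    have : Tendsto (fun t : ℂ => ω * t) (𝓝 0) (𝓝 0) := by
      have : Continuous (fun t : ℂ => ω * t) := by fun_prop
      simpa using this.tendsto 0
    exact this hmem
  have h3 := nhdsWithin_le_nhds (s := {(0 : ℂ)}ᶜ) (hmem2.and hmem)
  obtain ⟨t, ⟨⟨x, ⟨hx1, hx2⟩, hx3⟩, ⟨y, ⟨hy1, hy2⟩, hy3⟩⟩, ht⟩ :=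
    (Filter.Eventually.and h3 self_mem_nhdsWithin).exists
  have hxy : f x = f y := by
    rw [hx1, hy1, hx3, hy3, mul_pow, hω.pow_eq_one, one_mul]
  have hxy' := hinj hx2 hy2 hxy
  subst hxy'
  have h4 : ω * t = t := by rw [← hx3, ← hy3]
  have h5 : ω = 1 := mul_right_cancel₀ ht (by simpa using h4)
  exact hω.ne_one (by omega) h5

/-- A holomorphic map into the image of an injective holomorphic map lifts. -/
theorem exists_lift_of_mapsTo_image {f p : ℂ → ℂ} {U V : Set ℂ} (hU : IsOpen U) (hV : IsOpen V)
    (hf : DifferentiableOn ℂ f U) (hinj : InjOn f U) (hp : DifferentiableOn ℂ p V)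
    (hmaps : MapsTo p V (f '' U)) :
    ∃ k : ℂ → ℂ, DifferentiableOn ℂ k V ∧ ∀ z ∈ V, k z ∈ U ∧ f (k z) = p z := by
  set G := Function.invFunOn f U
  refine ⟨G ∘ p, fun z hz => ?_, fun z hz =>
    ⟨Function.invFunOn_mem (hmaps hz), Function.invFunOn_eq (hmaps hz)⟩⟩
  obtain ⟨x, hxU, hx⟩ := hmaps hz
  have hUx := hU.mem_nhds hxU
  have hGf : ∀ᶠ y in 𝓝 x, G (f y) = y := by
    filter_upwards [hUx] with y hy using hinj.leftInvOn_invFunOn hy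
  have hs : HasStrictDerivAt f (deriv f x) x := (hf.analyticAt hUx).hasStrictDerivAt
  have hd0 := deriv_ne_zero_of_injOn hU hf hinj hxU
  have hmap := hs.map_nhds_eq hd0
  have hGx : G (f x) = x := hGf.self_of_nhds
  have hGc : ContinuousAt G (f x) := by
    rw [ContinuousAt, ← hmap, hGx, tendsto_map'_iff]
    exact tendsto_id.congr' (hGf.mono fun y hy => hy.symm)
  have hfG : ∀ᶠ y in 𝓝 (f x), f (G y) = y := by
    rw [← hmap, eventually_map]
    filter_upwards [hGf] with y hy using by rw [hy]
  have hGd : HasDerivAt G (deriv f x)⁻¹ (f x) :=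
    HasDerivAt.of_local_left_inverse hGc (hGx.symm ▸ hs.hasDerivAt) hd0 hfG
  rw [hx] at hGd
  exact (hGd.differentiableAt.comp z (hp.differentiableAt (hV.mem_nhds hz))).differentiableWithinAt

/-- A zero-free holomorphic function on a disc has a holomorphic logarithm. -/
theorem exists_differentiableOn_exp_eq {F : ℂ → ℂ} {R : ℝ} (hR : 0 < R)
    (hF : DifferentiableOn ℂ F (ball 0 R)) (h0 : ∀ z ∈ ball (0 : ℂ) R, F z ≠ 0) :
    ∃ P : ℂ → ℂ, DifferentiableOn ℂ P (ball 0 R) ∧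
      ∀ z ∈ ball (0 : ℂ) R, Complex.exp (P z) = F z := by
  have h0R : (0 : ℂ) ∈ ball (0 : ℂ) R := mem_ball_self hR
  have hq : DifferentiableOn ℂ (fun z => deriv F z / F z) (ball 0 R) :=
    (hF.deriv isOpen_ball).div hF h0
  obtain ⟨P, hP0, hP⟩ := hq.isExactOn_ball.with_val_at 0 (Complex.log (F 0))
  refine ⟨P, fun z hz => (hP z hz).differentiableAt.differentiableWithinAt, fun z hz => ?_⟩
  have hFd : ∀ z ∈ ball (0 : ℂ) R, HasDerivAt F (deriv F z) z := fun z hz =>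
    (hF.differentiableAt (isOpen_ball.mem_nhds hz)).hasDerivAt
  have hconst : F z * Complex.exp (-P z) = F 0 * Complex.exp (-P 0) := by
    refine (convex_ball (0 : ℂ) R).is_const_of_fderivWithin_eq_zero (𝕜 := ℂ)
      (f := fun z => F z * Complex.exp (-P z)) ?_ ?_ hz h0R
    · exact hF.mul (Complex.differentiable_exp.comp_differentiableOn
        (fun z hz => (hP z hz).differentiableAt.differentiableWithinAt.neg))
    · intro x hx
      have h1 : HasDerivAt (fun z => F z * Complex.exp (-P z)) 0 x := by
        have := (hFd x hx).mul (hP x hx).neg.cexp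
        refine this.congr_deriv ?_
        have := h0 x hx
        simp only [Pi.neg_apply]
        field_simp
        ring
      rw [fderivWithin_of_isOpen isOpen_ball hx]
      ext
      simp [h1.hasFDerivAt.fderiv]
  rw [hP0, Complex.exp_neg (Complex.log _), Complex.exp_log (h0 0 h0R),
    mul_inv_cancel₀ (h0 0 h0R), Complex.exp_neg] at hconst
  have := Complex.exp_ne_zero (P z)
  field_simp at hconst
  exact hconst.symm

/-- Oscillation bound for holomorphic functions with nonnegative real part. -/
theorem norm_sub_le_of_re_nonneg {p : ℂ → ℂ} {R M : ℝ} (hR : 0 < R) (hM : 0 < M)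
    (hp : DifferentiableOn ℂ p (ball 0 R)) (hre : ∀ z ∈ ball (0 : ℂ) R, 0 ≤ (p z).re)
    (h0 : (p 0).re ≤ M) {z : ℂ} (hz : z ∈ ball (0 : ℂ) R) :
    ‖p z - p 0‖ ≤ 2 * M * ‖z‖ / (R - ‖z‖) := by
  have := Complex.borelCaratheodory_zero (f := fun z => p 0 - p z) hM
    (hp.const_sub _) (fun x hx => ?_) hR hz (by simp)
  · rwa [norm_sub_rev]
  · have := hre x hx
    simp only [mem_ofPred_eq, Complex.sub_re]
    linarith

/-- A bounded holomorphic function that omits a value `w` stays quantitatively away from `w`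
on compact subdiscs. -/
theorem exists_pos_le_norm_sub_of_omits {T d r : ℝ} (hd : 0 < d) (hr : 0 ≤ r)
    (hr1 : r < 1) :
    ∃ c > 0, ∀ (f : ℂ → ℂ) (w : ℂ), DifferentiableOn ℂ f (ball 0 1) →
      (∀ z ∈ ball (0 : ℂ) 1, ‖f z - w‖ ≤ T) → (∀ z ∈ ball (0 : ℂ) 1, f z ≠ w) →
      d ≤ ‖f 0 - w‖ → ∀ z : ℂ, ‖z‖ ≤ r → c ≤ ‖f z - w‖ := by
  set L := |Real.log T - Real.log d| + 1
  have hL : 0 < L := by positivity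
  refine ⟨Real.exp (Real.log T - (L + 2 * L * r / (1 - r))), Real.exp_pos _, ?_⟩
  intro f w hf hb hne h0 z hz
  have hzb : z ∈ ball (0 : ℂ) 1 := by simpa using lt_of_le_of_lt hz hr1
  have h0b : (0 : ℂ) ∈ ball (0 : ℂ) 1 := by simp
  obtain ⟨P, hP, hPe⟩ := exists_differentiableOn_exp_eq one_pos (hf.sub_const w)
    (fun z hz => sub_ne_zero.2 (hne z hz))
  have hlog : ∀ z ∈ ball (0 : ℂ) 1, (P z).re = Real.log ‖f z - w‖ := fun z hz => by
    rw [← hPe z hz, Complex.norm_exp, Real.log_exp]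
  have hpos : ∀ z ∈ ball (0 : ℂ) 1, 0 < ‖f z - w‖ := fun z hz =>
    norm_pos_iff.2 (sub_ne_zero.2 (hne z hz))
  have key := norm_sub_le_of_re_nonneg (p := fun z => (Real.log T : ℂ) - P z) one_pos hL
    (hP.const_sub _) (fun z hz => ?_) ?_ hzb
  · have h1 := (Complex.abs_re_le_norm _).trans key
    have h2 : 2 * L * ‖z‖ / (1 - ‖z‖) ≤ 2 * L * r / (1 - r) := by
      have : 0 < 1 - r := by linarith
      gcongr
    have h3 := (abs_le.1 (h1.trans h2)).2
    have h4 : Real.log d ≤ Real.log ‖f 0 - w‖ := Real.log_le_log hd h0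
    have h5 := le_abs_self (Real.log T - Real.log d)
    simp only [Complex.sub_re, hlog z hzb, hlog 0 h0b, Complex.ofReal_re] at h3
    rw [← Real.le_log_iff_exp_le (hpos z hzb)]
    simp only [L] at *
    linarith
  · have := Real.log_le_log (hpos z hz) (hb z hz)
    simp only [Complex.sub_re, Complex.ofReal_re, hlog z hz]
    linarith
  · have h4 : Real.log d ≤ Real.log ‖f 0 - w‖ := Real.log_le_log hd h0
    have h5 := le_abs_self (Real.log T - Real.log d)
    simp only [Complex.sub_re, Complex.ofReal_re, hlog 0 h0b]
    simp only [L]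
    linarith

/-- Quantitative rigidity in the Schwarz lemma. -/
theorem norm_sub_self_le_of_schwarz {k : ℂ → ℂ} {r a : ℝ} (hr : 0 < r) (hr1 : r < 1)
    (hk : DifferentiableOn ℂ k (ball 0 r)) (hmaps : MapsTo k (ball 0 r) (ball 0 1))
    (hk0 : k 0 = 0) (hka : deriv k 0 = a) (hra : r ≤ a) {z : ℂ} (hz : z ∈ ball (0 : ℂ) r) :
    ‖k z - z‖ ≤ 2 * (1 / r - r) / (r - ‖z‖) + (1 / r - r) := by
  have hmaps' : MapsTo k (ball 0 r) (closedBall (k 0) 1) := by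
    rw [hk0]; exact hmaps.mono_right ball_subset_closedBall
  have h0 : (0 : ℂ) ∈ ball (0 : ℂ) r := mem_ball_self hr
  have hb : ∀ z ∈ ball (0 : ℂ) r, ‖dslope k 0 z‖ ≤ 1 / r := fun z hz =>
    Complex.norm_dslope_le_div_of_mapsTo_ball hk hmaps' hz
  have hd : DifferentiableOn ℂ (dslope k 0) (ball 0 r) :=
    (Complex.differentiableOn_dslope (isOpen_ball.mem_nhds h0)).2 hk
  have h1r : 1 < 1 / r := by rw [lt_div_iff₀ hr]; linarith
  have hM : 0 < 1 / r - r := by linarith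
  have ha1 : a ≤ 1 / r := by
    have := hb 0 h0
    rw [dslope_same, hka, Complex.norm_real] at this
    exact (le_abs_self a).trans this
  have key := norm_sub_le_of_re_nonneg (p := fun z => ((1 / r : ℝ) : ℂ) - dslope k 0 z) hr hM
    (hd.const_sub _) (fun z hz => ?_) ?_ hz
  · have hzr : ‖z‖ < r := by simpa using hz
    have hz1 : ‖z‖ ≤ 1 := by linarith
    have hkz : k z = z * dslope k 0 z := by
      have := sub_smul_dslope k 0 z
      simpa [hk0] using this.symm
    have h2 : ‖dslope k 0 z - a‖ ≤ 2 * (1 / r - r) * ‖z‖ / (r - ‖z‖) := by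
      rw [norm_sub_rev]
      simpa [dslope_same, hka] using key
    have h3 : ‖(a : ℂ) - 1‖ ≤ 1 / r - r := by
      have : (a : ℂ) - 1 = ((a - 1 : ℝ) : ℂ) := by push_cast; ring
      rw [this, Complex.norm_real, Real.norm_eq_abs, abs_le]
      constructor <;> linarith
    have h4 : 2 * (1 / r - r) * ‖z‖ / (r - ‖z‖) ≤ 2 * (1 / r - r) / (r - ‖z‖) := by
      have : 0 < r - ‖z‖ := by linarith
      exact div_le_div_of_nonneg_right (mul_le_of_le_one_right (by linarith) hz1) this.le
    calc ‖k z - z‖ = ‖z‖ * ‖(dslope k 0 z - a) + (a - 1)‖ := by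
          rw [← norm_mul, hkz]; congr 1; ring
      _ ≤ 1 * (‖dslope k 0 z - a‖ + ‖(a : ℂ) - 1‖) := by
          gcongr; exact norm_add_le _ _
      _ ≤ _ := by linarith
  · have := (Complex.re_le_norm _).trans (hb z hz)
    simp only [Complex.sub_re, Complex.ofReal_re]
    linarith
  · simp only [Complex.sub_re, Complex.ofReal_re, dslope_same, hka]
    linarith

/-- `f` is a normalized Riemann map of `W`, continuous up to the boundary of the unit disc. -/
structure IsNormalizedRiemannMap (f : ℂ → ℂ) (W : Set ℂ) (z₀ : ℂ) : Prop where
  continuousOn : ContinuousOn f (closure (ball (0 : ℂ) 1))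
  differentiableOn : DifferentiableOn ℂ f (ball (0 : ℂ) 1)
  injOn : InjOn f (ball (0 : ℂ) 1)
  image_eq : f '' ball (0 : ℂ) 1 = W
  map_zero : f 0 = z₀
  deriv_zero : ∃ a : ℝ, 0 < a ∧ deriv f 0 = (a : ℂ)

theorem frontier_connectedComponentIn_compl_subset {K : Set ℂ} (hK : IsClosed K) (z₀ : ℂ) :
    frontier (connectedComponentIn Kᶜ z₀) ⊆ K := by
  intro x hx
  by_contra hxK
  have ho : IsOpen (connectedComponentIn Kᶜ z₀) := hK.isOpen_compl.connectedComponentIn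
  have hox : IsOpen (connectedComponentIn Kᶜ x) := hK.isOpen_compl.connectedComponentIn
  have hxx : x ∈ connectedComponentIn Kᶜ x := mem_connectedComponentIn hxK
  rw [ho.frontier_eq] at hx
  obtain ⟨y, hy1, hy2⟩ := mem_closure_iff.1 hx.1 _ hox hxx
  apply hx.2
  rw [connectedComponentIn_eq hy2, ← connectedComponentIn_eq hy1]
  exact hxx

theorem IsPreconnected.subset_of_disjoint_frontier {S W : Set ℂ} (hS : IsPreconnected S)
    (hW : IsOpen W) (hd : Disjoint S (frontier W)) (hne : (S ∩ W).Nonempty) : S ⊆ W := by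
  refine hS.subset_left_of_subset_union hW isClosed_closure.isOpen_compl
    (disjoint_compl_right.mono_left subset_closure) (fun x hx => ?_) hne
  by_cases hxW : x ∈ W
  · exact Or.inl hxW
  · refine Or.inr fun hc => disjoint_left.1 hd hx ?_
    rw [hW.frontier_eq]
    exact ⟨hc, hxW⟩

theorem connectedComponentIn_compl_frontier_eq {W : Set ℂ} (hW : IsOpen W)
    (hc : IsPreconnected W) {z₀ : ℂ} (hz₀ : z₀ ∈ W) :
    connectedComponentIn (frontier W)ᶜ z₀ = W := by
  have hWd : W ⊆ (frontier W)ᶜ := fun x hx hxf => by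
    rw [hW.frontier_eq] at hxf
    exact hxf.2 hx
  apply Subset.antisymm
  · refine isPreconnected_connectedComponentIn.subset_of_disjoint_frontier hW ?_
      ⟨z₀, mem_connectedComponentIn (hWd hz₀), hz₀⟩
    exact disjoint_left.2 fun x hx => connectedComponentIn_subset _ _ hx
  · exact hc.subset_connectedComponentIn hz₀ hWd

namespace IsNormalizedRiemannMap

variable {f : ℂ → ℂ} {W : Set ℂ} {z₀ : ℂ}

theorem isOpen (hf : IsNormalizedRiemannMap f W z₀) : IsOpen W := by
  rw [← hf.image_eq, isOpen_iff_mem_nhds]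
  rintro _ ⟨x, hx, rfl⟩
  have hUx := isOpen_ball.mem_nhds hx
  have hs : HasStrictDerivAt f (deriv f x) x :=
    (hf.differentiableOn.analyticAt hUx).hasStrictDerivAt
  rw [← hs.map_nhds_eq (deriv_ne_zero_of_injOn isOpen_ball hf.differentiableOn hf.injOn hx)]
  exact image_mem_map hUx

theorem isPreconnected (hf : IsNormalizedRiemannMap f W z₀) : IsPreconnected W := by
  rw [← hf.image_eq]
  exact (convex_ball _ _).isPreconnected.image _ hf.differentiableOn.continuousOn

theorem mem (hf : IsNormalizedRiemannMap f W z₀) : z₀ ∈ W := by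
  rw [← hf.image_eq, ← hf.map_zero]
  exact mem_image_of_mem _ (by simp)

theorem mapsTo (hf : IsNormalizedRiemannMap f W z₀) {z : ℂ} (hz : z ∈ ball (0 : ℂ) 1) :
    f z ∈ W := hf.image_eq ▸ mem_image_of_mem f hz

/-- The Riemann map sends the unit circle into the boundary. -/
theorem map_mem_frontier (hf : IsNormalizedRiemannMap f W z₀) {ζ : ℂ} (hζ : ‖ζ‖ = 1) :
    f ζ ∈ frontier W := by
  have hζc : ζ ∈ closure (ball (0 : ℂ) 1) := by
    rw [closure_ball _ one_ne_zero]; simp [hζ]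
  rw [hf.isOpen.frontier_eq]
  refine ⟨?_, fun hW => ?_⟩
  · rw [← hf.image_eq]
    exact hf.continuousOn.image_closure (mem_image_of_mem f hζc)
  · rw [← hf.image_eq] at hW
    obtain ⟨x, hx, hxζ⟩ := hW
    have hne : x ≠ ζ := by rintro rfl; simp [hζ] at hx
    obtain ⟨A, B, hA, hB, hxA, hζB, hAB⟩ := t2_separation hne
    have hUx : A ∩ ball 0 1 ∈ 𝓝 x := inter_mem (hA.mem_nhds hxA) (isOpen_ball.mem_nhds hx)
    have hs : HasStrictDerivAt f (deriv f x) x :=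
      (hf.differentiableOn.analyticAt (isOpen_ball.mem_nhds hx)).hasStrictDerivAt
    have hmap :=
      hs.map_nhds_eq (deriv_ne_zero_of_injOn isOpen_ball hf.differentiableOn hf.injOn hx)
    have himg : f '' (A ∩ ball 0 1) ∈ 𝓝 (f ζ) := by
      rw [← hxζ, ← hmap]; exact image_mem_map hUx
    have hcont : Tendsto f (𝓝[ball 0 1] ζ) (𝓝 (f ζ)) :=
      (hf.continuousOn ζ hζc).mono subset_closure
    have : (𝓝[ball (0 : ℂ) 1] ζ).NeBot := mem_closure_iff_nhdsWithin_neBot.1 hζc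
    have hBn : ∀ᶠ y in 𝓝[ball (0 : ℂ) 1] ζ, y ∈ B := nhdsWithin_le_nhds (hB.mem_nhds hζB)
    obtain ⟨y, ⟨⟨x', hx', hx'y⟩, hyB⟩, hy⟩ :=
      (((hcont.eventually himg).and hBn).and self_mem_nhdsWithin).exists
    have := hf.injOn hx'.2 hy hx'y
    subst this
    exact disjoint_left.1 hAB hx'.1 hyB

theorem isBounded (hf : IsNormalizedRiemannMap f W z₀) : Bornology.IsBounded W := by
  rw [← hf.image_eq]
  have hc : IsCompact (closure (ball (0 : ℂ) 1)) := by
    rw [closure_ball _ one_ne_zero]; exact isCompact_closedBall _ _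
  exact (hc.image_of_continuousOn hf.continuousOn).isBounded.subset (image_mono subset_closure)

theorem norm_le_of_frontier (hf : IsNormalizedRiemannMap f W z₀) {M : ℝ}
    (hM : ∀ x ∈ frontier W, ‖x‖ ≤ M) {x : ℂ} (hx : x ∈ W) : ‖x‖ ≤ M :=
  Complex.norm_le_of_forall_mem_frontier_norm_le hf.isBounded differentiable_id.diffContOnCl hM
    (subset_closure hx)

end IsNormalizedRiemannMap

/-- Normalized Riemann maps depend continuously on the boundary, locally uniformly in the disc. -/
theorem IsNormalizedRiemannMap.exists_norm_sub_lt_of_norm_le {φ : ℂ → ℂ} {Ω : Set ℂ} {z₀ : ℂ}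
    (hφ : IsNormalizedRiemannMap φ Ω z₀) {ρ η : ℝ} (hρ1 : ρ < 1) (hη : 0 < η) :
    ∃ δ > 0, ∀ h f : ℂ → ℂ, ContinuousOn h (frontier Ω) → (∀ z ∈ frontier Ω, dist (h z) z < δ) →
      IsNormalizedRiemannMap f (connectedComponentIn (h '' frontier Ω)ᶜ z₀) z₀ →
      ∀ z : ℂ, ‖z‖ ≤ ρ → ‖f z - φ z‖ < η := by
  have hcD : IsCompact (closure (ball (0 : ℂ) 1)) := by
    rw [closure_ball _ one_ne_zero]; exact isCompact_closedBall _ _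
  have hγc : IsCompact (frontier Ω) :=
    hφ.isBounded.isCompact_closure.of_isClosed_subset isClosed_frontier frontier_subset_closure
  obtain ⟨M, hM0, hM⟩ : ∃ M > 0, ∀ x ∈ frontier Ω, ‖x‖ ≤ M :=
    hγc.isBounded.exists_pos_norm_le
  have hγΩ : ∀ x ∈ frontier Ω, x ∉ Ω := fun x hx => by
    rw [hφ.isOpen.frontier_eq] at hx; exact hx.2
  obtain ⟨d, hd0, hd⟩ : ∃ d > 0, ball z₀ d ⊆ Ω := Metric.isOpen_iff.1 hφ.isOpen z₀ hφ.mem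
  obtain ⟨η', hη'0, hη'⟩ :=
    Metric.uniformContinuousOn_iff.1 (hcD.uniformContinuousOn_of_continuous hφ.continuousOn) η hη
  obtain ⟨r, hr0, hr1, hrρ, hrη⟩ : ∃ r : ℝ, 0 < r ∧ r < 1 ∧ ρ < r ∧
      2 * (1 / r - r) / (r - ρ) + (1 / r - r) < η' := by
    have hcont : ContinuousAt (fun r : ℝ => 2 * (1 / r - r) / (r - ρ) + (1 / r - r)) 1 := by
      have : (1 : ℝ) - ρ ≠ 0 := by linarith
      fun_prop (disch := first | simp | assumption)
    have h1 : ∀ᶠ r : ℝ in 𝓝[<] 1, 2 * (1 / r - r) / (r - ρ) + (1 / r - r) < η' :=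
      nhdsWithin_le_nhds (hcont.eventually_lt_const (by simpa using hη'0))
    have h2 : ∀ᶠ r : ℝ in 𝓝[<] 1, 0 < r := nhdsWithin_le_nhds (lt_mem_nhds one_pos)
    have h3 : ∀ᶠ r : ℝ in 𝓝[<] 1, ρ < r := nhdsWithin_le_nhds (lt_mem_nhds hρ1)
    obtain ⟨r, h⟩ := (((h1.and h2).and h3).and self_mem_nhdsWithin).exists
    exact ⟨r, h.1.1.2, h.2, h.1.2, h.1.1.1⟩
  have hrD : closedBall (0 : ℂ) r ⊆ ball 0 1 := closedBall_subset_ball hr1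
  have hrD' : ball (0 : ℂ) r ⊆ ball 0 1 := ball_subset_ball hr1.le
  have h0r : (0 : ℂ) ∈ ball (0 : ℂ) r := mem_ball_self hr0
  obtain ⟨δ₁, hδ₁0, hδ₁⟩ : ∃ δ₁ > 0, ∀ x ∈ frontier Ω, ∀ z ∈ closedBall (0 : ℂ) r,
      δ₁ ≤ dist (φ z) x := by
    have hdis : Disjoint (φ '' closedBall (0 : ℂ) r) (frontier Ω) := by
      rw [disjoint_left]
      rintro _ ⟨z, hz, rfl⟩ hx
      exact hγΩ _ hx (hφ.mapsTo (hrD hz))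
    have hcomp : IsCompact (φ '' closedBall (0 : ℂ) r) :=
      (isCompact_closedBall _ _).image_of_continuousOn
        (hφ.differentiableOn.continuousOn.mono hrD)
    obtain ⟨δ₁, hδ, h⟩ := hdis.exists_thickenings hcomp isClosed_frontier
    refine ⟨δ₁, hδ, fun x hx z hz => ?_⟩
    by_contra hlt
    push Not at hlt
    refine Set.disjoint_left.1 h (?_ : x ∈ _) (self_subset_thickening hδ _ hx)
    rw [mem_thickening_iff]
    exact ⟨φ z, mem_image_of_mem _ hz, by rwa [dist_comm]⟩
  obtain ⟨c, hc0, hc⟩ := exists_pos_le_norm_sub_of_omits (T := 2 * (M + 1)) (half_pos hd0) hr0.le hr1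
  refine ⟨min (min 1 (d / 2)) (min δ₁ c), by positivity, fun h f hh hclose hf z hz => ?_⟩
  have hcl : ∀ x ∈ frontier Ω, dist (h x) x < 1 ∧ dist (h x) x < d / 2 ∧ dist (h x) x < δ₁ ∧
      dist (h x) x < c := fun x hx => by
    have := hclose x hx
    simp only [lt_min_iff] at this
    tauto
  set K := h '' frontier Ω
  have hKc : IsCompact K := hγc.image_of_continuousOn hh
  have hKM : ∀ x ∈ K, ‖x‖ ≤ M + 1 := by
    rintro _ ⟨x, hx, rfl⟩
    have h1 := (hcl x hx).1
    have h2 := hM x hx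
    rw [dist_eq_norm] at h1
    have := norm_le_norm_add_norm_sub' (h x) x
    linarith
  have hfM : ∀ z ∈ ball (0 : ℂ) 1, ‖f z‖ ≤ M + 1 := fun z hz =>
    hf.norm_le_of_frontier (fun x hx =>
      hKM x (frontier_connectedComponentIn_compl_subset hKc.isClosed z₀ hx)) (hf.mapsTo hz)
  have hfK : ∀ z ∈ ball (0 : ℂ) 1, f z ∉ K := fun z hz =>
    connectedComponentIn_subset _ _ (hf.mapsTo hz)
  have hlow : ∀ x ∈ frontier Ω, ∀ z ∈ ball (0 : ℂ) r, c ≤ ‖f z - h x‖ := by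
    intro x hx z hz
    refine hc f (h x) hf.differentiableOn (fun z hz => ?_)
      (fun z hz he => hfK z hz (he ▸ mem_image_of_mem h hx)) ?_ z (by simpa using (mem_ball_zero_iff.1 hz).le)
    · calc ‖f z - h x‖ ≤ ‖f z‖ + ‖h x‖ := norm_sub_le _ _
        _ ≤ 2 * (M + 1) := by linarith [hfM z hz, hKM _ (mem_image_of_mem h hx)]
    · rw [hf.map_zero, ← dist_eq_norm]
      have h1 : d ≤ dist x z₀ := by
        by_contra hlt
        exact hγΩ x hx (hd (by simpa using hlt))
      have h2 := (hcl x hx).2.1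
      have h3 := dist_triangle_left x z₀ (h x)
      rw [dist_comm z₀]
      linarith
  have hfΩ : MapsTo f (ball 0 r) (φ '' ball 0 1) := by
    rw [hφ.image_eq, mapsTo_iff_image_subset]
    refine IsPreconnected.subset_of_disjoint_frontier ((convex_ball _ _).isPreconnected.image _
      (hf.differentiableOn.continuousOn.mono hrD')) hφ.isOpen ?_
      ⟨z₀, ⟨0, h0r, hf.map_zero⟩, hφ.mem⟩
    rw [disjoint_left]
    rintro _ ⟨z, hz, rfl⟩ hx
    have h1 := hlow _ hx z hz
    have h2 := (hcl _ hx).2.2.2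
    rw [dist_eq_norm, norm_sub_rev] at h2
    linarith
  have hφK : MapsTo φ (ball 0 r) (f '' ball 0 1) := by
    rw [hf.image_eq, mapsTo_iff_image_subset]
    refine IsPreconnected.subset_connectedComponentIn ((convex_ball _ _).isPreconnected.image _
      (hφ.differentiableOn.continuousOn.mono hrD')) ⟨0, h0r, hφ.map_zero⟩ ?_
    rintro _ ⟨z, hz, rfl⟩ ⟨x, hx, hxz⟩
    have h1 := hδ₁ x hx z (ball_subset_closedBall hz)
    have h2 := (hcl x hx).2.2.1
    rw [hxz] at h2
    linarith
  obtain ⟨k, hk, hkφ⟩ := exists_lift_of_mapsTo_image isOpen_ball isOpen_ball hφ.differentiableOn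
    hφ.injOn (hf.differentiableOn.mono hrD') hfΩ
  obtain ⟨g, hg, hgf⟩ := exists_lift_of_mapsTo_image isOpen_ball isOpen_ball hf.differentiableOn
    hf.injOn (hφ.differentiableOn.mono hrD') hφK
  have h01 : (0 : ℂ) ∈ ball (0 : ℂ) 1 := by simp
  have hk0 : k 0 = 0 := hφ.injOn (hkφ 0 h0r).1 h01 (by rw [(hkφ 0 h0r).2, hf.map_zero, hφ.map_zero])
  have hg0 : g 0 = 0 := hf.injOn (hgf 0 h0r).1 h01 (by rw [(hgf 0 h0r).2, hf.map_zero, hφ.map_zero])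
  obtain ⟨a, ha0, ha⟩ := hφ.deriv_zero
  obtain ⟨b, hb0, hb⟩ := hf.deriv_zero
  have hchain : ∀ {F G H : ℂ → ℂ}, DifferentiableOn ℂ F (ball 0 1) →
      DifferentiableOn ℂ G (ball 0 r) → G 0 = 0 → (∀ z ∈ ball (0 : ℂ) r, F (G z) = H z) →
      deriv F 0 * deriv G 0 = deriv H 0 := by
    intro F G H hF hG hG0 hFG
    have h1 : HasDerivAt F (deriv F 0) (G 0) := by
      rw [hG0]; exact (hF.differentiableAt (isOpen_ball.mem_nhds h01)).hasDerivAt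
    have h2 := (hG.differentiableAt (isOpen_ball.mem_nhds h0r)).hasDerivAt
    have h3 := (h1.comp 0 h2).deriv
    rw [← h3]
    apply Filter.EventuallyEq.deriv_eq
    filter_upwards [isOpen_ball.mem_nhds h0r] with z hz using hFG z hz
  have hkd : deriv k 0 = ((b / a : ℝ) : ℂ) := by
    have := hchain hφ.differentiableOn hk hk0 fun z hz => (hkφ z hz).2
    rw [ha, hb] at this
    have : (a : ℂ) ≠ 0 := by exact_mod_cast ha0.ne'
    push_cast
    field_simp
    rwa [mul_comm]
  have hgd : deriv g 0 = ((a / b : ℝ) : ℂ) := by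
    have := hchain hf.differentiableOn hg hg0 fun z hz => (hgf z hz).2
    rw [ha, hb] at this
    have : (b : ℂ) ≠ 0 := by exact_mod_cast hb0.ne'
    push_cast
    field_simp
    rwa [mul_comm]
  have hrab : r ≤ b / a := by
    have h1 : ‖deriv g 0‖ ≤ 1 / r := by
      refine Complex.norm_deriv_le_div_of_mapsTo_ball hg (fun z hz => ?_) hr0
      rw [hg0]
      exact ball_subset_closedBall (hgf z hz).1
    rw [hgd, Complex.norm_real, Real.norm_eq_abs, abs_of_pos (by positivity),
      div_le_div_iff₀ hb0 hr0] at h1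
    rw [le_div_iff₀ ha0]
    linarith
  have hzr : z ∈ ball (0 : ℂ) r := by simpa using hz.trans_lt hrρ
  have hkz := norm_sub_self_le_of_schwarz hr0 hr1 hk (fun z hz => (hkφ z hz).1) hk0 hkd hrab hzr
  have hkz' : ‖k z - z‖ < η' := by
    refine hkz.trans_lt (lt_of_le_of_lt ?_ hrη)
    have h1 : 0 < r - ρ := by linarith
    have h2 : 0 ≤ 1 / r - r := by
      have : 1 < 1 / r := by rw [lt_div_iff₀ hr0]; linarith
      linarith
    gcongr
  rw [← (hkφ z hzr).2, ← dist_eq_norm]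
  exact hη' _ (subset_closure (hkφ z hzr).1) _ (subset_closure (hrD' hzr))
    (by rwa [dist_eq_norm])

/-- `q` has a continuous logarithm on `S`. -/
def HasContinuousLogOn (q : ℂ → ℂ) (S : Set ℂ) : Prop :=
  ∃ L : ℂ → ℂ, ContinuousOn L S ∧ ∀ s ∈ S, Complex.exp (L s) = q s

namespace HasContinuousLogOn

variable {p q : ℂ → ℂ} {S : Set ℂ}

theorem congr (hq : HasContinuousLogOn q S) (h : EqOn p q S) : HasContinuousLogOn p S := by
  obtain ⟨L, hL, hLe⟩ := hq
  exact ⟨L, hL, fun s hs => by rw [hLe s hs, h hs]⟩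

theorem mono {S' : Set ℂ} (hq : HasContinuousLogOn q S) (h : S' ⊆ S) :
    HasContinuousLogOn q S' := by
  obtain ⟨L, hL, hLe⟩ := hq
  exact ⟨L, hL.mono h, fun s hs => hLe s (h hs)⟩

theorem mul (hp : HasContinuousLogOn p S) (hq : HasContinuousLogOn q S) :
    HasContinuousLogOn (fun s => p s * q s) S := by
  obtain ⟨L, hL, hLe⟩ := hp
  obtain ⟨L', hL', hLe'⟩ := hq
  exact ⟨fun s => L s + L' s, hL.add hL', fun s hs => by
    rw [Complex.exp_add, hLe s hs, hLe' s hs]⟩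

theorem inv (hp : HasContinuousLogOn p S) : HasContinuousLogOn (fun s => (p s)⁻¹) S := by
  obtain ⟨L, hL, hLe⟩ := hp
  exact ⟨fun s => -L s, hL.neg, fun s hs => by rw [Complex.exp_neg, hLe s hs]⟩

theorem div (hp : HasContinuousLogOn p S) (hq : HasContinuousLogOn q S) :
    HasContinuousLogOn (fun s => p s / q s) S := by
  simpa only [div_eq_mul_inv] using hp.mul hq.inv

theorem const {c : ℂ} (hc : c ≠ 0) : HasContinuousLogOn (fun _ => c) S :=
  ⟨fun _ => Complex.log c, continuousOn_const, fun _ _ => Complex.exp_log hc⟩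

theorem of_norm_sub_one_lt (hp : ContinuousOn p S) (h : ∀ s ∈ S, ‖p s - 1‖ < 1) :
    HasContinuousLogOn p S := by
  have hslit : ∀ s ∈ S, p s ∈ Complex.slitPlane := fun s hs => by
    have := Complex.mem_slitPlane_of_norm_lt_one (h s hs)
    simpa using this
  exact ⟨fun s => Complex.log (p s), hp.clog hslit, fun s hs =>
    Complex.exp_log (Complex.slitPlane_ne_zero (hslit s hs))⟩

theorem of_norm_sub_lt (hq : HasContinuousLogOn q S) (hqc : ContinuousOn q S)
    (hp : ContinuousOn p S) (h : ∀ s ∈ S, ‖p s - q s‖ < ‖q s‖) : HasContinuousLogOn p S := by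
  have hq0 : ∀ s ∈ S, q s ≠ 0 := fun s hs => norm_pos_iff.1 ((norm_nonneg _).trans_lt (h s hs))
  have h1 : HasContinuousLogOn (fun s => p s / q s) S := by
    refine of_norm_sub_one_lt (hp.div hqc hq0) fun s hs => ?_
    rw [div_sub_one (hq0 s hs), norm_div, div_lt_one (norm_pos_iff.2 (hq0 s hs))]
    exact h s hs
  exact (hq.mul h1).congr fun s hs => (mul_div_cancel₀ (p s) (hq0 s hs)).symm

end HasContinuousLogOn

/-- The existence of a continuous logarithm on a compact set is a homotopy invariant. -/
theorem HasContinuousLogOn.homotopy {T : Type*} [TopologicalSpace T] [PreconnectedSpace T]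
    {K : Set ℂ} (hK : IsCompact K) {H : T → ℂ → ℂ}
    (hH : Continuous fun x : T × K => H x.1 x.2) (h0 : ∀ t, ∀ s ∈ K, H t s ≠ 0) {t₀ t₁ : T}
    (h : HasContinuousLogOn (H t₀) K) : HasContinuousLogOn (H t₁) K := by
  have hcK : CompactSpace K := isCompact_iff_compactSpace.1 hK
  have hc : ∀ t, ContinuousOn (H t) K := fun t => by
    rw [continuousOn_iff_continuous_domRestrict]
    exact hH.comp (Continuous.prodMk_right t)
  have key : ∀ x : T, ∀ᶠ y in 𝓝 x,
      (HasContinuousLogOn (H x) K ↔ HasContinuousLogOn (H y) K) := by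
    intro x
    have h1 : ∀ᶠ y in 𝓝 x, ∀ s ∈ (univ : Set K),
        ‖H y s - H x s‖ < ‖H x s‖ ∧ ‖H x s - H y s‖ < ‖H y s‖ := by
      refine isCompact_univ.eventually_forall_of_forall_eventually fun s _ => ?_
      have hs := norm_pos_iff.2 (h0 x s s.2)
      have c1 : Continuous fun z : T × K => H z.1 z.2 := hH
      have c2 : Continuous fun z : T × K => H x z.2 :=
        hH.comp (continuous_const.prodMk continuous_snd)
      have e1 : ∀ᶠ z : T × K in 𝓝 (x, s), ‖H z.1 z.2 - H x z.2‖ < ‖H x z.2‖ :=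
        ((c1.sub c2).norm.continuousAt).eventually_lt c2.norm.continuousAt (by simpa using hs)
      have e2 : ∀ᶠ z : T × K in 𝓝 (x, s), ‖H x z.2 - H z.1 z.2‖ < ‖H z.1 z.2‖ :=
        ((c2.sub c1).norm.continuousAt).eventually_lt c1.norm.continuousAt (by simpa using hs)
      exact e1.and e2
    filter_upwards [h1] with y hy
    exact ⟨fun hx => hx.of_norm_sub_lt (hc x) (hc y) fun s hs => (hy ⟨s, hs⟩ trivial).1,
      fun hx => hx.of_norm_sub_lt (hc y) (hc x) fun s hs => (hy ⟨s, hs⟩ trivial).2⟩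
  have := isPreconnected_univ.induction₂
    (fun x y : T => (HasContinuousLogOn (H x) K ↔ HasContinuousLogOn (H y) K))
    (fun x _ => by simpa using key x) (fun x y z _ _ _ h1 h2 => h1.trans h2)
    (fun x y _ _ h => h.symm) (mem_univ t₀) (mem_univ t₁)
  exact this.1 h

theorem hasContinuousLogOn_of_convex {R : Set ℂ} (hR : IsCompact R) (hconv : Convex ℝ R)
    {u : ℂ → ℂ} (hu : ContinuousOn u R) (h0 : ∀ s ∈ R, u s ≠ 0) : HasContinuousLogOn u R := by
  rcases R.eq_empty_or_nonempty with rfl | ⟨a, ha⟩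
  · exact ⟨0, continuousOn_empty _, by simp⟩
  have hmem : ∀ t : unitInterval, ∀ s ∈ R, a + (t : ℝ) • (s - a) ∈ R := fun t s hs =>
    hconv.add_smul_sub_mem ha hs t.2
  have := HasContinuousLogOn.homotopy (T := unitInterval) hR
    (H := fun t s => u (a + (t : ℝ) • (s - a))) (t₀ := 0) (t₁ := 1) ?_
    (fun t s hs => h0 _ (hmem t s hs)) ?_
  · simpa using this
  · refine hu.comp_continuous (by fun_prop) fun x => hmem x.1 x.2 x.2.2
  · simpa using HasContinuousLogOn.const (h0 a ha)

theorem hasContinuousLogOn_of_mem_connectedComponentIn {K : Set ℂ} (hK : IsCompact K) {z₀ w : ℂ}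
    (hw : w ∈ connectedComponentIn Kᶜ z₀) :
    HasContinuousLogOn (fun ξ => (ξ - w) / (ξ - z₀)) K := by
  have hz₀ : z₀ ∈ Kᶜ := by
    by_contra h
    simp [connectedComponentIn_eq_empty h] at hw
  set T := connectedComponentIn Kᶜ z₀
  have hT : PreconnectedSpace T := Subtype.preconnectedSpace isPreconnected_connectedComponentIn
  have hne : ∀ t ∈ Kᶜ, ∀ s ∈ K, s - t ≠ 0 := fun t ht s hs h =>
    ht (sub_eq_zero.1 h ▸ hs)
  have hTK : T ⊆ Kᶜ := connectedComponentIn_subset _ _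
  refine HasContinuousLogOn.homotopy (T := T) hK (H := fun t ξ => (ξ - t) / (ξ - z₀))
    (t₀ := ⟨z₀, mem_connectedComponentIn hz₀⟩) (t₁ := ⟨w, hw⟩) ?_
    (fun t s hs => div_ne_zero (hne _ (hTK t.2) s hs) (hne _ hz₀ s hs)) ?_
  · refine Continuous.div (by fun_prop) (by fun_prop) fun x => hne _ hz₀ _ x.2.2
  · exact (HasContinuousLogOn.const one_ne_zero).congr fun s hs => div_self (hne _ hz₀ s hs)

theorem hasContinuousLogOn_sub_closedBall {c w : ℂ} {r : ℝ} (hw : w ∉ closedBall c r) :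
    HasContinuousLogOn (fun ξ => ξ - w) (closedBall c r) := by
  refine hasContinuousLogOn_of_convex (isCompact_closedBall _ _) (convex_closedBall _ _)
    (by fun_prop) fun s hs h => hw (sub_eq_zero.1 h ▸ hs)

/-- A continuous function with `exp D = 1` on a preconnected set is constant there. -/
theorem IsPreconnected.eq_of_exp_eq_one {B : Set ℂ} (hB : IsPreconnected B) {D : ℂ → ℂ}
    (hD : ContinuousOn D B) (h1 : ∀ x ∈ B, Complex.exp (D x) = 1) {x y : ℂ} (hx : x ∈ B)
    (hy : y ∈ B) : D x = D y := by
  refine hB.induction₂ (fun x y => D x = D y) (fun x hx => ?_) (fun _ _ _ _ _ _ => Eq.trans)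
    (fun _ _ _ _ => Eq.symm) hx hy
  have hball : ∀ᶠ y in 𝓝[B] x, D y ∈ ball (D x) (2 * Real.pi) :=
    (hD x hx).eventually (ball_mem_nhds _ (by positivity))
  filter_upwards [hball, self_mem_nhdsWithin] with y hy hyB
  have he : Complex.exp (D y - D x) = 1 := by rw [Complex.exp_sub, h1 y hyB, h1 x hx, div_one]
  obtain ⟨n, hn⟩ := Complex.exp_eq_one_iff.1 he
  rw [mem_ball, dist_eq_norm, hn] at hy
  simp only [norm_mul, Complex.norm_intCast, Complex.norm_I, Complex.norm_real,
    Complex.norm_ofNat, mul_one, Real.norm_eq_abs, abs_of_pos Real.pi_pos] at hy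
  have h2 : |(n : ℝ)| < 1 := by
    have := Real.pi_pos
    by_contra hcon
    push Not at hcon
    nlinarith
  have h3 : n = 0 := by
    have : |n| < 1 := by exact_mod_cast h2
    exact Int.abs_lt_one_iff.1 this
  rw [h3] at hn
  simp at hn
  exact (sub_eq_zero.1 hn).symm

/-- The function `s ↦ s - a` has no continuous logarithm on the boundary of a convex body
with `a` in its interior. -/
theorem not_hasContinuousLogOn_frontier {R : Set ℂ} (hR : IsCompact R) (hconv : Convex ℝ R)
    {a : ℂ} (ha : a ∈ interior R) : ¬ HasContinuousLogOn (fun s => s - a) (frontier R) := by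
  rintro ⟨L, hL, hLe⟩
  set R' : Set ℂ := (fun s => a + s) ⁻¹' R with hR'
  have hhom : R' = (Homeomorph.addLeft a) ⁻¹' R := rfl
  have hR'c : Convex ℝ R' := hconv.translate_preimage_right a
  have hR'0 : R' ∈ 𝓝 (0 : ℂ) := by
    have : ContinuousAt (fun s : ℂ => a + s) 0 := by fun_prop
    exact this (by simpa using mem_interior_iff_mem_nhds.1 ha)
  have hR'b : Bornology.IsBounded R' := by
    rw [hhom]
    exact ((Homeomorph.addLeft a).isCompact_preimage.2 hR).isBounded
  have hfr : frontier R' = (fun s => a + s) ⁻¹' frontier R := by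
    rw [hhom, ← Homeomorph.preimage_frontier]; rfl
  set e : ℝ → ℂ := fun θ => Complex.exp (θ * Complex.I)
  have hec : Continuous e := by fun_prop
  have he0 : ∀ θ, e θ ≠ 0 := fun θ => Complex.exp_ne_zero _
  set g : ℝ → ℝ := fun θ => gauge R' (e θ)
  have hgc : Continuous g := (continuous_gauge hR'c hR'0).comp hec
  have hg0 : ∀ θ, 0 < g θ := fun θ =>
    (gauge_pos (absorbent_nhds_zero hR'0)
      (NormedSpace.isVonNBounded_of_isBounded ℝ hR'b)).2 (he0 θ)
  have hp : ∀ θ, a + (g θ)⁻¹ • e θ ∈ frontier R := fun θ => by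
    have : (g θ)⁻¹ • e θ ∈ frontier R' := by
      rw [← gauge_eq_one_iff_mem_frontier hR'c hR'0, gauge_smul_of_nonneg (inv_nonneg.2 (hg0 θ).le)]
      exact inv_mul_cancel₀ (hg0 θ).ne'
    rw [hfr] at this
    exact this
  set D : ℝ → ℂ := fun θ => L (a + (g θ)⁻¹ • e θ) + (Real.log (g θ) : ℝ) - θ * Complex.I
  have hDc : Continuous D := by
    have h1 : Continuous fun θ => a + (g θ)⁻¹ • e θ :=
      continuous_const.add ((hgc.inv₀ fun θ => (hg0 θ).ne').smul hec)
    have h2 : Continuous fun θ => L (a + (g θ)⁻¹ • e θ) := hL.comp_continuous h1 hp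
    have h3 : Continuous fun θ => Real.log (g θ) := hgc.log fun θ => (hg0 θ).ne'
    exact (h2.add (Complex.continuous_ofReal.comp h3)).sub (by fun_prop)
  have hD1 : ∀ θ, Complex.exp (D θ) = 1 := fun θ => by
    have h1 : ((g θ : ℝ) : ℂ) ≠ 0 := by exact_mod_cast (hg0 θ).ne'
    have h2 : Complex.exp (L (a + (g θ)⁻¹ • e θ)) = (g θ)⁻¹ • e θ := by
      rw [hLe _ (hp θ)]
      exact add_sub_cancel_left _ _
    rw [Complex.exp_sub, Complex.exp_add, h2, ← Complex.ofReal_exp,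
      Real.exp_log (hg0 θ), div_eq_one_iff_eq (Complex.exp_ne_zero _),
      Complex.real_smul, Complex.ofReal_inv, mul_right_comm, inv_mul_cancel₀ h1, one_mul]
  have hD2 : D 0 = D (2 * Real.pi) := by
    have hcomp : ContinuousOn (fun z : ℂ => D z.re) univ :=
      (hDc.comp Complex.continuous_re).continuousOn
    have := isPreconnected_univ.eq_of_exp_eq_one hcomp (fun x _ => hD1 x.re)
      (mem_univ (0 : ℂ)) (mem_univ ((2 * Real.pi : ℝ) : ℂ))
    simpa using this
  have hee : e (2 * Real.pi) = e 0 := by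
    simp only [e]
    push_cast
    rw [Complex.exp_two_pi_mul_I]; simp
  simp only [D, g, hee] at hD2
  have h5 : (2 * Real.pi : ℂ) * Complex.I = 0 := by
    have := sub_right_injective hD2
    push_cast at this
    simpa using this.symm
  simp [Real.pi_ne_zero] at h5

/-- A topological rectangle lemma: if the boundary of a convex body is mapped partly into `K`
and partly into a disc `E`, where the transition takes place in a connected subset of `K ∩ E`,
then the interior points not separated from `z₀` by `K` are mapped into `E`. -/
theorem mem_closedBall_of_frontier_subset_union {R A C B K : Set ℂ} {F : ℂ → ℂ} {s₁ z₀ c : ℂ}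
    {r : ℝ} (hR : IsCompact R) (hconv : Convex ℝ R) (hF : ContinuousOn F R)
    (hFd : DifferentiableOn ℂ F (interior R)) (hFi : InjOn F (interior R))
    (hs₁ : s₁ ∈ interior R) (hA : IsClosed A) (hC : IsClosed C) (hAR : A ⊆ R) (hCR : C ⊆ R)
    (hcover : frontier R ⊆ A ∪ C) (hK : IsCompact K) (hFA : MapsTo F A K)
    (hFC : MapsTo F C (closedBall c r)) (hB : IsPreconnected B) (hBK : B ⊆ K)
    (hBE : B ⊆ closedBall c r) (hFB : MapsTo F (A ∩ C) B) (hz₀E : z₀ ∉ closedBall c r)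
    (hz₀ : ∀ s ∈ R, F s ≠ z₀) (hw : F s₁ ∈ connectedComponentIn Kᶜ z₀) :
    F s₁ ∈ closedBall c r := by
  by_contra hwE
  set w := F s₁ with hwdef
  set E := closedBall c r
  have hwK : w ∉ K := connectedComponentIn_subset _ _ hw
  obtain ⟨LK, hLK, hLKe⟩ := hasContinuousLogOn_of_mem_connectedComponentIn hK hw
  obtain ⟨LE, hLE, hLEe⟩ := (hasContinuousLogOn_sub_closedBall hwE).div
    (hasContinuousLogOn_sub_closedBall hz₀E)
  have hwne : ∀ ξ ∈ E, (ξ - w) / (ξ - z₀) ≠ 0 := fun ξ hξ =>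
    div_ne_zero (sub_ne_zero.2 fun h => hwE (h ▸ hξ)) (sub_ne_zero.2 fun h => hz₀E (h ▸ hξ))
  obtain ⟨κ, hκ, hκe⟩ : ∃ κ : ℂ, (∀ ξ ∈ B, LK ξ = LE ξ + κ) ∧ Complex.exp κ = 1 := by
    rcases B.eq_empty_or_nonempty with rfl | ⟨b, hb⟩
    · exact ⟨0, by simp, by simp⟩
    have h1 : ∀ ξ ∈ B, Complex.exp (LK ξ - LE ξ) = 1 := fun ξ hξ => by
      rw [Complex.exp_sub, hLKe _ (hBK hξ), hLEe _ (hBE hξ), div_self (hwne _ (hBE hξ))]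
    refine ⟨LK b - LE b, fun ξ hξ => ?_, h1 b hb⟩
    have h2 : LK ξ - LE ξ = LK b - LE b :=
      hB.eq_of_exp_eq_one (D := fun ξ => LK ξ - LE ξ)
        ((hLK.mono hBK).sub (hLE.mono hBE)) h1 hξ hb
    rw [← h2, add_sub_cancel]
  classical
  have hlog : HasContinuousLogOn (fun s => (F s - w) / (F s - z₀)) (A ∪ C) := by
    set L : ℂ → ℂ := fun s => if s ∈ A then LK (F s) else LE (F s) + κ
    have hLA : EqOn L (fun s => LK (F s)) A := fun s hs => if_pos hs
    have hLC : EqOn L (fun s => LE (F s) + κ) C := fun s hs => by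
      by_cases hsA : s ∈ A
      · rw [hLA hsA]
        exact hκ _ (hFB ⟨hsA, hs⟩)
      · exact if_neg hsA
    refine ⟨L, ?_, ?_⟩
    · refine ContinuousOn.union_of_isClosed ?_ ?_ hA hC
      · exact (hLK.comp (hF.mono hAR) hFA).congr hLA
      · exact ((hLE.comp (hF.mono hCR) hFC).add continuousOn_const).congr hLC
    · rintro s (hs | hs)
      · rw [hLA hs, hLKe _ (hFA hs)]
      · rw [hLC hs, Complex.exp_add, hκe, mul_one, hLEe _ (hFC hs)]
  have hfR : frontier R ⊆ R := hR.isClosed.frontier_subset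
  have hnhds : interior R ∈ 𝓝 s₁ := isOpen_interior.mem_nhds hs₁
  have hdiff : DifferentiableAt ℂ F s₁ := hFd.differentiableAt hnhds
  have hGc : ContinuousOn (dslope F s₁) R :=
    (continuousOn_dslope (mem_of_superset hnhds interior_subset)).2 ⟨hF, hdiff⟩
  have hFne : ∀ s ∈ frontier R, F s ≠ w := fun s hs h => by
    rcases hcover hs with h1 | h1
    · exact hwK (h ▸ hFA h1)
    · exact hwE (h ▸ hFC h1)
  have hG0 : ∀ s ∈ R, dslope F s₁ s ≠ 0 := fun s hs => by
    rcases eq_or_ne s s₁ with rfl | hne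
    · rw [dslope_same]
      exact deriv_ne_zero_of_injOn isOpen_interior hFd hFi hs₁
    · rw [dslope_of_ne _ hne, slope_def_field]
      refine div_ne_zero (sub_ne_zero.2 fun h => ?_) (sub_ne_zero.2 hne)
      by_cases hsi : s ∈ interior R
      · exact hne (hFi hsi hs₁ h)
      · exact hFne s ⟨subset_closure hs, hsi⟩ h
  have hz : HasContinuousLogOn (fun s => F s - z₀) R :=
    hasContinuousLogOn_of_convex hR hconv (hF.sub continuousOn_const) fun s hs =>
      sub_ne_zero.2 (hz₀ s hs)
  have hG := hasContinuousLogOn_of_convex hR hconv hGc hG0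
  refine not_hasContinuousLogOn_frontier hR hconv hs₁
    ((((hlog.mono hcover).mul (hz.mono hfR)).div (hG.mono hfR)).congr fun s hs => ?_)
  have h1 : F s - z₀ ≠ 0 := sub_ne_zero.2 (hz₀ s (hfR hs))
  have h2 := hG0 s (hfR hs)
  have h3 := sub_smul_dslope F s₁ s
  simp only [smul_eq_mul] at h3
  show s - s₁ = (F s - w) / (F s - z₀) * (F s - z₀) / dslope F s₁ s
  rw [div_mul_cancel₀ _ h1, ← h3, mul_div_cancel_right₀ _ h2]

open MeasureTheory in
/-- Area formula for injective holomorphic functions. -/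
theorem lintegral_norm_deriv_sq_eq_volume_image {F : ℂ → ℂ} {Q : Set ℂ} (hQ : IsOpen Q)
    (hF : DifferentiableOn ℂ F Q) (hinj : InjOn F Q) :
    ∫⁻ s in Q, ENNReal.ofReal (‖deriv F s‖ ^ 2) = volume (F '' Q) := by
  have hdet : ∀ a : ℂ, (a • (1 : ℂ →L[ℝ] ℂ)).det = ‖a‖ ^ 2 := fun a => by
    have h1 : ((a • (1 : ℂ →L[ℝ] ℂ) : ℂ →L[ℝ] ℂ) : ℂ →ₗ[ℝ] ℂ) = Algebra.lmul ℝ ℂ a := by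
      ext; simp
    rw [ContinuousLinearMap.det, h1, ← Algebra.norm_apply, Algebra.norm_complex_apply,
      Complex.normSq_eq_norm_sq]
  rw [← lintegral_abs_det_fderiv_eq_addHaar_image volume hQ.measurableSet
    (f' := fun s => deriv F s • (1 : ℂ →L[ℝ] ℂ)) (fun s hs => ?_) hinj]
  · simp only [hdet, abs_pow, abs_norm]
  · exact (hF.differentiableAt (hQ.mem_nhds hs)).hasDerivAt.complexToReal_fderiv.hasFDerivWithinAt

open MeasureTheory in
theorem setLIntegral_reProdIm {g : ℂ → ENNReal} (hg : Measurable g) {S T : Set ℝ}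
    (hS : MeasurableSet S) (hT : MeasurableSet T) :
    ∫⁻ s in S ×ℂ T, g s = ∫⁻ θ in T, ∫⁻ x in S, g ⟨x, θ⟩ := by
  have h1 : Complex.measurableEquivRealProd ⁻¹' (S ×ˢ T) = S ×ℂ T := rfl
  have h2 := Complex.volume_preserving_equiv_real_prod.setLIntegral_comp_preimage (hS.prod hT)
    (f := fun p : ℝ × ℝ => g ⟨p.1, p.2⟩)
    (hg.comp Complex.measurableEquivRealProd.symm.measurable)
  rw [h1] at h2
  have h3 : ∫⁻ s in S ×ℂ T, g s = ∫⁻ p in S ×ˢ T, g ⟨p.1, p.2⟩ := h2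
  rw [h3, Measure.volume_eq_prod, ← Measure.prod_restrict]
  exact lintegral_prod_symm _ (hg.comp Complex.measurableEquivRealProd.symm.measurable).aemeasurable

open MeasureTheory in
/-- Length-area estimate: an injective bounded holomorphic function on a thin rectangle
oscillates little along some of the short segments. -/
theorem exists_norm_sub_le_of_injOn_reProdIm {F : ℂ → ℂ} {x₀ x₁ α β M ε : ℝ} (hx : x₀ < x₁)
    (hαβ : α < β) (hM : 0 < M) (hε : 0 < ε) (hF : DifferentiableOn ℂ F (Ioo x₀ x₁ ×ℂ Ioo α β))
    (hinj : InjOn F (Ioo x₀ x₁ ×ℂ Ioo α β)) (hb : ∀ s ∈ Ioo x₀ x₁ ×ℂ Ioo α β, ‖F s‖ ≤ M)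
    (hthin : 4 * M ^ 2 * (x₁ - x₀) ≤ ε ^ 2 * (β - α)) :
    ∃ θ ∈ Ioo α β, ∀ x ∈ Ioo x₀ x₁, ∀ y ∈ Ioo x₀ x₁, ‖F ⟨x, θ⟩ - F ⟨y, θ⟩‖ ≤ ε := by
  have hQ : IsOpen (Ioo x₀ x₁ ×ℂ Ioo α β) := isOpen_Ioo.reProdIm isOpen_Ioo
  set J : ℝ := 4 * M ^ 2 / (β - α) with hJ
  have hβα : 0 < β - α := sub_pos.2 hαβ
  have hJ0 : 0 < J := by positivity
  have harea : ∫⁻ θ in Ioo α β, ∫⁻ x in Ioo x₀ x₁, ENNReal.ofReal (‖deriv F ⟨x, θ⟩‖ ^ 2)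
      ≤ ENNReal.ofReal (M ^ 2 * Real.pi) := by
    rw [← setLIntegral_reProdIm (g := fun s => ENNReal.ofReal (‖deriv F s‖ ^ 2))
      ((measurable_deriv F).norm.pow_const 2).ennreal_ofReal measurableSet_Ioo measurableSet_Ioo,
      lintegral_norm_deriv_sq_eq_volume_image hQ hF hinj]
    refine (measure_mono (t := closedBall 0 M) ?_).trans_eq ?_
    · rintro _ ⟨s, hs, rfl⟩
      simpa using hb s hs
    · rw [Complex.volume_closedBall, ENNReal.ofReal_mul (by positivity),
        ENNReal.ofReal_pow hM.le]
      congr 1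
      rw [ENNReal.ofReal_eq_coe_nnreal Real.pi_pos.le]
      rfl
  obtain ⟨θ, hθ, hθJ⟩ : ∃ θ ∈ Ioo α β,
      ∫⁻ x in Ioo x₀ x₁, ENNReal.ofReal (‖deriv F ⟨x, θ⟩‖ ^ 2) ≤ ENNReal.ofReal J := by
    by_contra! hcon
    have h1 : ∫⁻ _ in Ioo α β, ENNReal.ofReal J ≤
        ∫⁻ θ in Ioo α β, ∫⁻ x in Ioo x₀ x₁, ENNReal.ofReal (‖deriv F ⟨x, θ⟩‖ ^ 2) :=
      setLIntegral_mono' measurableSet_Ioo fun θ hθ => (hcon θ hθ).le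
    have h2 := h1.trans harea
    rw [setLIntegral_const, Real.volume_Ioo, ← ENNReal.ofReal_mul hJ0.le,
      ENNReal.ofReal_le_ofReal_iff (by positivity), hJ, div_mul_cancel₀ _ hβα.ne'] at h2
    nlinarith [Real.pi_lt_four, pow_pos hM 2]
  refine ⟨θ, hθ, ?_⟩
  suffices key : ∀ x ∈ Ioo x₀ x₁, ∀ y ∈ Ioo x₀ x₁, x ≤ y → ‖F ⟨y, θ⟩ - F ⟨x, θ⟩‖ ≤ ε by
    intro x hx y hy
    rcases le_total x y with h | h
    · rw [norm_sub_rev]; exact key x hx y hy h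
    · exact key y hy x hx h
  intro x hx y hy hxy
  have hsub : Icc x y ⊆ Ioo x₀ x₁ := fun t ht => ⟨hx.1.trans_le ht.1, ht.2.trans_lt hy.2⟩
  have hmk : ∀ t : ℝ, (⟨t, θ⟩ : ℂ) = t + θ * Complex.I := fun t => Complex.mk_eq_add_mul_I _ _
  have hmem : ∀ t ∈ Icc x y, (⟨t, θ⟩ : ℂ) ∈ Ioo x₀ x₁ ×ℂ Ioo α β := fun t ht => ⟨hsub ht, hθ⟩
  have hcont : ContinuousOn (fun t : ℝ => deriv F ⟨t, θ⟩) (Icc x y) := by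
    refine (hF.deriv hQ).continuousOn.comp ?_ hmem
    simp only [hmk]
    fun_prop
  have hderiv : ∀ t ∈ uIcc x y, HasDerivAt (fun t : ℝ => F ⟨t, θ⟩) (deriv F ⟨t, θ⟩) t := by
    intro t ht
    rw [uIcc_of_le hxy] at ht
    have h1 : HasDerivAt F (deriv F ⟨t, θ⟩) (t + θ * Complex.I) := by
      rw [← hmk]
      exact (hF.differentiableAt (hQ.mem_nhds (hmem t ht))).hasDerivAt
    have h2 := (h1.comp_add_const (t : ℂ) (θ * Complex.I)).comp_ofReal
    simpa only [hmk] using h2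
  have hn1 : IntegrableOn (fun t : ℝ => ‖deriv F ⟨t, θ⟩‖) (Icc x y) :=
    hcont.norm.integrableOn_Icc
  have hn2 : IntegrableOn (fun t : ℝ => ‖deriv F ⟨t, θ⟩‖ ^ 2) (Icc x y) :=
    (hcont.norm.pow 2).integrableOn_Icc
  have hsq : ∫ t in Icc x y, ‖deriv F ⟨t, θ⟩‖ ^ 2 ≤ J := by
    rw [← ENNReal.ofReal_le_ofReal_iff hJ0.le,
      ofReal_integral_eq_lintegral_ofReal hn2 (ae_of_all _ fun t => sq_nonneg _)]
    exact (lintegral_mono_set hsub).trans hθJ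
  have hc : 0 < ε / (x₁ - x₀) := div_pos hε (by linarith)
  set c := ε / (x₁ - x₀)
  rw [← intervalIntegral.integral_eq_sub_of_hasDerivAt hderiv
    (hcont.intervalIntegrable_of_Icc hxy)]
  have hpt : ∀ t, ‖deriv F ⟨t, θ⟩‖ ≤ c / 2 + ‖deriv F ⟨t, θ⟩‖ ^ 2 * (1 / (2 * c)) := fun t => by
    have h1 := sq_nonneg (‖deriv F ⟨t, θ⟩‖ - c)
    have h2 : c / 2 + ‖deriv F ⟨t, θ⟩‖ ^ 2 * (1 / (2 * c)) =
      (c ^ 2 + ‖deriv F ⟨t, θ⟩‖ ^ 2) / (2 * c) := by field_simp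
    rw [h2, le_div_iff₀ (by positivity)]
    linarith
  calc ‖∫ t in x..y, deriv F ⟨t, θ⟩‖ ≤ ∫ t in x..y, ‖deriv F ⟨t, θ⟩‖ :=
        intervalIntegral.norm_integral_le_integral_norm hxy
    _ = ∫ t in Icc x y, ‖deriv F ⟨t, θ⟩‖ := by
        rw [intervalIntegral.integral_of_le hxy, integral_Icc_eq_integral_Ioc]
    _ ≤ ∫ t in Icc x y, (c / 2 + ‖deriv F ⟨t, θ⟩‖ ^ 2 * (1 / (2 * c))) :=
        integral_mono hn1 ((integrable_const _).add (hn2.mul_const _)) hpt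
    _ = (y - x) * (c / 2) + (∫ t in Icc x y, ‖deriv F ⟨t, θ⟩‖ ^ 2) * (1 / (2 * c)) := by
        rw [integral_add (integrable_const _) (hn2.mul_const _), integral_mul_const]
        simp [hxy]
    _ ≤ (x₁ - x₀) * (c / 2) + J * (1 / (2 * c)) := by
        gcongr
        · exact hy.2.le
        · exact hx.1.le
    _ ≤ ε / 2 + ε / 2 := by
        have hx' : 0 < x₁ - x₀ := by linarith
        have h1 : (x₁ - x₀) * (c / 2) = ε / 2 := by simp only [c]; field_simp
        have h2 : J * (1 / (2 * c)) = 4 * M ^ 2 * (x₁ - x₀) / (β - α) / ε / 2 := by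
          simp only [c, hJ]; field_simp
        rw [h1, h2]
        gcongr
        rw [div_le_iff₀ hε, div_le_iff₀ hβα]
        linarith
    _ = ε := by ring

/-- The continuous image of a compact interval is uniformly locally connected. -/
theorem exists_isPreconnected_subset_ball_of_dist_lt {X : Type*} [MetricSpace X] {g : ℝ → X}
    {a b ε : ℝ} (hg : ContinuousOn g (Icc a b)) (hε : 0 < ε) :
    ∃ η > 0, ∀ p ∈ g '' Icc a b, ∀ q ∈ g '' Icc a b, dist p q < η →
      ∃ B ⊆ g '' Icc a b, IsPreconnected B ∧ p ∈ B ∧ q ∈ B ∧ B ⊆ ball p ε := by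
  obtain ⟨τ, hτ, hunif⟩ := Metric.uniformContinuousOn_iff.1
    (isCompact_Icc.uniformContinuousOn_of_continuous hg) (ε / 2) (half_pos hε)
  set S : Set (ℝ × ℝ) := Icc a b ×ˢ Icc a b
  set Z : Set (ℝ × ℝ) := {x | x ∈ S ∧ g x.1 = g x.2}
  have hcomp : IsCompact (S \ thickening τ Z) :=
    (isCompact_Icc.prod isCompact_Icc).diff isOpen_thickening
  have hcont : ContinuousOn (fun x : ℝ × ℝ => dist (g x.1) (g x.2)) (S \ thickening τ Z) :=
    have h1 : ContinuousOn (fun x : ℝ × ℝ => g x.1) (S \ thickening τ Z) :=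
      hg.comp continuousOn_fst fun x hx => hx.1.1
    have h2 : ContinuousOn (fun x : ℝ × ℝ => g x.2) (S \ thickening τ Z) :=
      hg.comp continuousOn_snd fun x hx => hx.1.2
    continuous_dist.comp_continuousOn (h1.prodMk h2)
  obtain ⟨η, hη, hle⟩ := hcomp.exists_forall_le' hcont (a := 0) fun x hx => by
    refine dist_pos.2 fun h => hx.2 (self_subset_thickening hτ Z ⟨hx.1, h⟩)
  refine ⟨η, hη, ?_⟩
  rintro _ ⟨s, hs, rfl⟩ _ ⟨t, ht, rfl⟩ hlt
  have hmem : (s, t) ∈ thickening τ Z := by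
    by_contra hcon
    exact (hle (s, t) ⟨⟨hs, ht⟩, hcon⟩).not_gt hlt
  obtain ⟨⟨s', t'⟩, ⟨⟨hs', ht'⟩, heq⟩, hd⟩ := mem_thickening_iff.1 hmem
  simp only at hs' ht' heq
  rw [Prod.dist_eq, max_lt_iff] at hd
  simp only at hd
  have hsub : ∀ {u v : ℝ}, u ∈ Icc a b → v ∈ Icc a b → uIcc u v ⊆ Icc a b :=
    fun hu hv => ordConnected_Icc.uIcc_subset hu hv
  have hclose : ∀ {u v x : ℝ}, u ∈ Icc a b → v ∈ Icc a b → dist u v < τ → x ∈ uIcc u v →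
      dist (g x) (g u) < ε / 2 ∧ dist (g x) (g v) < ε / 2 := by
    intro u v x hu hv huv hx
    refine ⟨hunif _ (hsub hu hv hx) _ hu ?_, hunif _ (hsub hu hv hx) _ hv ?_⟩
    · rw [Real.dist_eq]
      exact (abs_sub_left_of_mem_uIcc hx).trans_lt (by rwa [← Real.dist_eq, dist_comm])
    · rw [Real.dist_eq, abs_sub_comm]
      exact (abs_sub_right_of_mem_uIcc hx).trans_lt (by rwa [← Real.dist_eq, dist_comm])
  refine ⟨g '' uIcc s s' ∪ g '' uIcc t t', ?_, ?_, Or.inl ⟨s, left_mem_uIcc, rfl⟩,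
    Or.inr ⟨t, left_mem_uIcc, rfl⟩, ?_⟩
  · exact union_subset (image_mono (hsub hs hs')) (image_mono (hsub ht ht'))
  · refine IsPreconnected.union (g s') ⟨s', right_mem_uIcc, rfl⟩ ⟨t', right_mem_uIcc, heq.symm⟩
      (isPreconnected_uIcc.image _ (hg.mono (hsub hs hs')))
      (isPreconnected_uIcc.image _ (hg.mono (hsub ht ht')))
  · rintro _ (⟨x, hx, rfl⟩ | ⟨x, hx, rfl⟩)
    · exact (hclose hs hs' hd.1 hx).1.trans (half_lt_self hε)
    · have h1 := (hclose ht ht' hd.2 hx).2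
      have h2 := (hclose hs hs' hd.1 right_mem_uIcc).1
      rw [heq] at h2
      rw [mem_ball]
      linarith [dist_triangle (g x) (g t') (g s)]

namespace IsNormalizedRiemannMap

variable {φ : ℂ → ℂ} {Ω : Set ℂ} {z₀ : ℂ}

theorem frontier_subset_image_sphere (hφ : IsNormalizedRiemannMap φ Ω z₀) :
    frontier Ω ⊆ φ '' sphere 0 1 := by
  have hcl : closure (ball (0 : ℂ) 1) = closedBall 0 1 := closure_ball _ one_ne_zero
  have h1 : closure Ω ⊆ φ '' closedBall 0 1 := by
    refine closure_minimal ?_ ?_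
    · rw [← hφ.image_eq]
      exact image_mono ball_subset_closedBall
    · exact ((isCompact_closedBall _ _).image_of_continuousOn (hcl ▸ hφ.continuousOn)).isClosed
  intro w hw
  obtain ⟨z, hz, rfl⟩ := h1 hw.1
  refine ⟨z, ?_, rfl⟩
  rw [← closedBall_sdiff_ball]
  refine ⟨hz, fun hzb => hw.2 ?_⟩
  rw [hφ.isOpen.interior_eq]
  exact hφ.mapsTo hzb

/-- The boundary of a domain with a continuous Riemann map is uniformly locally connected. -/
theorem exists_isPreconnected_subset_frontier (hφ : IsNormalizedRiemannMap φ Ω z₀) {ε : ℝ}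
    (hε : 0 < ε) :
    ∃ η > 0, ∀ p ∈ frontier Ω, ∀ q ∈ frontier Ω, dist p q < η →
      ∃ B ⊆ frontier Ω, IsPreconnected B ∧ p ∈ B ∧ q ∈ B ∧ B ⊆ ball p ε := by
  have hcl : closure (ball (0 : ℂ) 1) = closedBall 0 1 := closure_ball _ one_ne_zero
  have hfr : frontier Ω = (fun θ : ℝ => φ (Complex.exp (θ * Complex.I))) ''
      Icc (-Real.pi) Real.pi := by
    refine Subset.antisymm (fun w hw => ?_) ?_
    · obtain ⟨z, hz, rfl⟩ := hφ.frontier_subset_image_sphere hw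
      have h1 := Complex.norm_mul_exp_arg_mul_I z
      rw [mem_sphere_zero_iff_norm.1 hz, Complex.ofReal_one, one_mul] at h1
      exact ⟨z.arg, ⟨(Complex.neg_pi_lt_arg z).le, Complex.arg_le_pi z⟩, by simp only [h1]⟩
    · rintro _ ⟨θ, -, rfl⟩
      exact hφ.map_mem_frontier (Complex.norm_exp_ofReal_mul_I θ)
  rw [hfr]
  refine exists_isPreconnected_subset_ball_of_dist_lt ?_ hε
  refine hφ.continuousOn.comp (by fun_prop) fun θ _ => ?_
  rw [hcl]
  simp [Complex.norm_exp_ofReal_mul_I]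

end IsNormalizedRiemannMap

theorem norm_sub_le_of_mem_Icc {g : ℝ → ℂ} {a b ε : ℝ} (hab : a < b)
    (hg : ContinuousOn g (Icc a b)) (h : ∀ x ∈ Ioo a b, ∀ y ∈ Ioo a b, ‖g x - g y‖ ≤ ε) {x y : ℝ}
    (hx : x ∈ Icc a b) (hy : y ∈ Icc a b) : ‖g x - g y‖ ≤ ε := by
  have hcl : closure (Ioo a b ×ˢ Ioo a b) = Icc a b ×ˢ Icc a b := by
    rw [closure_prod_eq, closure_Ioo hab.ne]
  have h1 : ContinuousOn (fun p : ℝ × ℝ => g p.1) (Icc a b ×ˢ Icc a b) :=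
    hg.comp continuousOn_fst fun p hp => hp.1
  have h2 : ContinuousOn (fun p : ℝ × ℝ => g p.2) (Icc a b ×ˢ Icc a b) :=
    hg.comp continuousOn_snd fun p hp => hp.2
  exact le_on_closure (s := Ioo a b ×ˢ Ioo a b) (f := fun p : ℝ × ℝ => ‖g p.1 - g p.2‖)
    (g := fun _ => ε) (fun p hp => h p.1 hp.1 p.2 hp.2) (hcl ▸ (h1.sub h2).norm)
    continuousOn_const (x := (x, y)) (hcl ▸ ⟨hx, hy⟩)

theorem Complex.injOn_exp_of_abs_im_sub_lt {S : Set ℂ}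
    (hS : ∀ s ∈ S, ∀ t ∈ S, |s.im - t.im| < 2 * Real.pi) : InjOn Complex.exp S := by
  intro s hs t ht hst
  obtain ⟨n, hn⟩ := Complex.exp_eq_exp_iff_exists_int.1 hst
  have h1 : s.im - t.im = n * (2 * Real.pi) := by
    rw [hn]
    simp
  have h2 := hS s hs t ht
  rw [h1, abs_mul, abs_of_pos Real.two_pi_pos] at h2
  have h3 : |(n : ℝ)| < 1 := by
    have := Real.two_pi_pos
    by_contra hcon
    push Not at hcon
    nlinarith
  have h4 : n = 0 := Int.abs_lt_one_iff.1 (by exact_mod_cast h3)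
  rw [hn, h4]
  simp

theorem Complex.norm_exp_sub_exp_le {s t : ℂ} (hs : s.re ≤ 0) (ht : t.re ≤ 0) :
    ‖Complex.exp s - Complex.exp t‖ ≤ ‖s - t‖ := by
  have hconv : Convex ℝ {z : ℂ | z.re ≤ 0} := convex_halfSpace_re_le 0
  have := hconv.norm_image_sub_le_of_norm_hasDerivWithin_le (f := Complex.exp)
    (f' := Complex.exp) (C := 1) (fun z _ => (Complex.hasDerivAt_exp z).hasDerivWithinAt)
    (fun z hz => by rw [Complex.norm_exp]; exact Real.exp_le_one_iff.2 hz) ht hs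
  simpa using this

/-- If a Riemann map is close to a constant on an arc of an inner circle, then it is close to this
constant on the outer part of the radius through the midpoint of the arc. -/
theorem IsNormalizedRiemannMap.norm_sub_le_of_arc {f : ℂ → ℂ} {K : Set ℂ} {z₀ c : ℂ}
    {M x₀ Δ θ₀ e₁ e₂ r : ℝ} (hK : IsCompact K)
    (hf : IsNormalizedRiemannMap f (connectedComponentIn Kᶜ z₀) z₀) (hM : 0 < M)
    (hfM : ∀ z ∈ ball (0 : ℂ) 1, ‖f z‖ ≤ M) (hx₀ : x₀ < 0) (hΔ : 0 < Δ) (hΔ1 : Δ ≤ 1)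
    (he₂ : 0 < e₂) (hthin : 4 * M ^ 2 * (-x₀) ≤ e₂ ^ 2 * Δ)
    (hinner : ∀ θ : ℝ, |θ - θ₀| ≤ 2 * Δ → ‖f (Complex.exp ⟨x₀, θ⟩) - c‖ ≤ e₁)
    (hlc : ∀ p ∈ K, ∀ q ∈ K, p ∈ closedBall c (e₁ + e₂) → q ∈ closedBall c (e₁ + e₂) →
      ∃ B ⊆ K, IsPreconnected B ∧ p ∈ B ∧ q ∈ B ∧ B ⊆ closedBall c r)
    (hr : e₁ + e₂ ≤ r) (hz₀ : z₀ ∉ closedBall c r) {x : ℝ} (hx : x ∈ Ioo x₀ 0) :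
    ‖f (Complex.exp ⟨x, θ₀⟩) - c‖ ≤ r := by
  have hcl : closure (ball (0 : ℂ) 1) = closedBall 0 1 := closure_ball _ one_ne_zero
  set F : ℂ → ℂ := fun s => f (Complex.exp s)
  have hexp_ball : ∀ s : ℂ, s.re < 0 → Complex.exp s ∈ ball (0 : ℂ) 1 := fun s hs => by
    rw [mem_ball_zero_iff, Complex.norm_exp]
    exact Real.exp_lt_one_iff.2 hs
  have hFc : ContinuousOn F {s | s.re ≤ 0} := by
    refine hf.continuousOn.comp Complex.continuous_exp.continuousOn fun s hs => ?_
    rw [hcl, mem_closedBall_zero_iff, Complex.norm_exp]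
    exact Real.exp_le_one_iff.2 hs
  have hFK : ∀ s : ℂ, s.re = 0 → F s ∈ K := fun s hs => by
    refine frontier_connectedComponentIn_compl_subset hK.isClosed z₀ (hf.map_mem_frontier ?_)
    rw [Complex.norm_exp, hs, Real.exp_zero]
  set S : Set ℂ := Iio 0 ×ℂ Ioo (θ₀ - 2 * Δ) (θ₀ + 2 * Δ)
  have hFd : DifferentiableOn ℂ F S :=
    hf.differentiableOn.comp Complex.differentiable_exp.differentiableOn fun s hs =>
      hexp_ball s hs.1
  have hFi : InjOn F S := by
    refine hf.injOn.comp (Complex.injOn_exp_of_abs_im_sub_lt fun s hs t ht => ?_) fun s hs =>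
      hexp_ball s hs.1
    have h1 := hs.2
    have h2 := ht.2
    rw [abs_lt]
    constructor <;> linarith [h1.1, h1.2, h2.1, h2.2, Real.pi_gt_three]
  have hgood : ∀ α β : ℝ, β - α = Δ → θ₀ - 2 * Δ ≤ α → β ≤ θ₀ + 2 * Δ →
      ∃ θ ∈ Ioo α β, ∀ x ∈ Icc x₀ 0, ‖F ⟨x, θ⟩ - c‖ ≤ e₁ + e₂ := by
    intro α β hαβ hα hβ
    have hsub : Ioo x₀ 0 ×ℂ Ioo α β ⊆ S := fun s hs =>
      ⟨hs.1.2, hα.trans_lt hs.2.1, hs.2.2.trans_le hβ⟩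
    obtain ⟨θ, hθ, hosc⟩ := exists_norm_sub_le_of_injOn_reProdIm hx₀ (by linarith) hM he₂
      (hFd.mono hsub) (hFi.mono hsub) (fun s hs => hfM _ (hexp_ball s hs.1.2))
      (by rw [hαβ, zero_sub]; exact hthin)
    refine ⟨θ, hθ, fun x hx => ?_⟩
    have h1 : ContinuousOn (fun x : ℝ => F ⟨x, θ⟩) (Icc x₀ 0) := by
      refine hFc.comp ?_ fun x hx => hx.2
      simp only [Complex.mk_eq_add_mul_I]
      fun_prop
    have h2 := norm_sub_le_of_mem_Icc hx₀ h1 hosc hx ⟨le_rfl, hx₀.le⟩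
    have h3 := hinner θ (by rw [abs_le]; constructor <;> linarith [hθ.1, hθ.2])
    have h4 := norm_sub_le_norm_sub_add_norm_sub (F ⟨x, θ⟩) (F ⟨x₀, θ⟩) c
    linarith
  obtain ⟨θ₁, hθ₁, hF₁⟩ := hgood (θ₀ - 2 * Δ) (θ₀ - Δ) (by ring) le_rfl (by linarith)
  obtain ⟨θ₂, hθ₂, hF₂⟩ := hgood (θ₀ + Δ) (θ₀ + 2 * Δ) (by ring) (by linarith) le_rfl
  have hθ₁₂ : θ₁ ≤ θ₂ := by linarith [hθ₁.2, hθ₂.1]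
  have h00 : (0 : ℝ) ∈ Icc x₀ 0 := ⟨hx₀.le, le_rfl⟩
  obtain ⟨B, hBK, hB, hB₁, hB₂, hBr⟩ := hlc (F ⟨0, θ₁⟩) (hFK _ rfl) (F ⟨0, θ₂⟩) (hFK _ rfl)
    (by rw [mem_closedBall, dist_eq_norm]; exact hF₁ 0 h00)
    (by rw [mem_closedBall, dist_eq_norm]; exact hF₂ 0 h00)
  set R : Set ℂ := Icc x₀ 0 ×ℂ Icc θ₁ θ₂
  have hRint : interior R = Ioo x₀ 0 ×ℂ Ioo θ₁ θ₂ := by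
    rw [Complex.interior_reProdIm, interior_Icc, interior_Icc]
  have hRc : IsCompact R := isCompact_Icc.reProdIm isCompact_Icc
  have hRconv : Convex ℝ R :=
    ((convex_Icc x₀ 0).linear_preimage Complex.reLm).inter
      ((convex_Icc θ₁ θ₂).linear_preimage Complex.imLm)
  have hRS : interior R ⊆ S := by
    rw [hRint]
    exact fun s hs => ⟨hs.1.2, hθ₁.1.trans hs.2.1, hs.2.2.trans hθ₂.2⟩
  have hRle : R ⊆ {s | s.re ≤ 0} := fun s hs => hs.1.2
  set A : Set ℂ := {0} ×ℂ Icc θ₁ θ₂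
  set C : Set ℂ := {x₀} ×ℂ Icc θ₁ θ₂ ∪ Icc x₀ 0 ×ℂ {θ₁, θ₂}
  have hs₁ : (⟨x, θ₀⟩ : ℂ) ∈ interior R := by
    rw [hRint]
    exact ⟨hx, by simp only; linarith [hθ₁.2], by simp only; linarith [hθ₂.1]⟩
  have hmem := mem_closedBall_of_frontier_subset_union (A := A) (C := C) (z₀ := z₀) hRc hRconv
    (hFc.mono hRle) (hFd.mono hRS) (hFi.mono hRS) hs₁
    (isClosed_singleton.reProdIm isClosed_Icc)
    ((isClosed_singleton.reProdIm isClosed_Icc).union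
      (isClosed_Icc.reProdIm (Set.toFinite _).isClosed))
    ?_ ?_ ?_ hK (fun s hs => hFK s hs.1) ?_ hB hBK hBr ?_ hz₀ ?_ (hf.mapsTo (hexp_ball _ hx.2))
  · rwa [mem_closedBall, dist_eq_norm] at hmem
  · exact inter_subset_inter_left _ (preimage_mono (singleton_subset_iff.2 h00))
  · refine union_subset (inter_subset_inter_left _ (preimage_mono ?_))
      (inter_subset_inter_right _ (preimage_mono ?_))
    · exact singleton_subset_iff.2 ⟨le_rfl, hx₀.le⟩
    · exact pair_subset ⟨le_rfl, hθ₁₂⟩ ⟨hθ₁₂, le_rfl⟩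
  · intro s hs
    have hsR : s ∈ R := hRc.isClosed.frontier_subset hs
    have hsi : s ∉ Ioo x₀ 0 ×ℂ Ioo θ₁ θ₂ := hRint ▸ hs.2
    by_contra hcon
    refine hsi ⟨⟨lt_of_le_of_ne hsR.1.1 fun h => hcon (Or.inr (Or.inl ⟨h.symm, hsR.2⟩)),
      lt_of_le_of_ne hsR.1.2 fun h => hcon (Or.inl ⟨h, hsR.2⟩)⟩,
      lt_of_le_of_ne hsR.2.1 fun h => hcon (Or.inr (Or.inr ⟨hsR.1, Or.inl h.symm⟩)),
      lt_of_le_of_ne hsR.2.2 fun h => hcon (Or.inr (Or.inr ⟨hsR.1, Or.inr h⟩))⟩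
  · rintro s (⟨hs1, hs2⟩ | ⟨hs1, hs2⟩)
    · have hs : s = ⟨x₀, s.im⟩ := Complex.ext hs1 rfl
      rw [mem_closedBall, dist_eq_norm, hs]
      refine (hinner s.im ?_).trans (by linarith)
      rw [abs_le]
      constructor <;> linarith [hs2.1, hs2.2, hθ₁.1, hθ₂.2]
    · rw [mem_closedBall, dist_eq_norm]
      refine le_trans ?_ hr
      rcases hs2 with h | h
      · have hs : s = ⟨s.re, θ₁⟩ := Complex.ext rfl h
        rw [hs]
        exact hF₁ s.re hs1
      · have hs : s = ⟨s.re, θ₂⟩ := Complex.ext rfl h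
        rw [hs]
        exact hF₂ s.re hs1
  · rintro s ⟨⟨hs1, hs2⟩, hsC⟩
    have hs0 : s.re = 0 := hs1
    rcases hsC with ⟨h, -⟩ | ⟨-, h | h⟩
    · exact absurd (h.symm.trans hs0) hx₀.ne
    · rwa [show s = ⟨0, θ₁⟩ from Complex.ext hs0 h]
    · rwa [show s = ⟨0, θ₂⟩ from Complex.ext hs0 h]
  · intro s hs hsz
    rcases hs.1.2.lt_or_eq with h | h
    · refine Complex.exp_ne_zero s (hf.injOn (hexp_ball s h) (mem_ball_self one_pos) ?_)
      rw [hf.map_zero]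
      exact hsz
    · exact connectedComponentIn_subset _ _ hf.mem (hsz ▸ hFK s h)

/-- Normalized Riemann maps depend continuously on the boundary, uniformly in the closed disc. -/
theorem IsNormalizedRiemannMap.exists_norm_sub_lt {φ : ℂ → ℂ} {Ω : Set ℂ} {z₀ : ℂ}
    (hφ : IsNormalizedRiemannMap φ Ω z₀) {ε : ℝ} (hε : 0 < ε) :
    ∃ δ > 0, ∀ h f : ℂ → ℂ, ContinuousOn h (frontier Ω) → (∀ z ∈ frontier Ω, dist (h z) z < δ) →
      IsNormalizedRiemannMap f (connectedComponentIn (h '' frontier Ω)ᶜ z₀) z₀ →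
      ∀ z ∈ closure (ball (0 : ℂ) 1), ‖f z - φ z‖ < ε := by
  have hcl : closure (ball (0 : ℂ) 1) = closedBall 0 1 := closure_ball _ one_ne_zero
  have hγc : IsCompact (frontier Ω) :=
    hφ.isBounded.isCompact_closure.of_isClosed_subset isClosed_frontier frontier_subset_closure
  obtain ⟨M, hM0, hM⟩ : ∃ M > 0, ∀ x ∈ frontier Ω, ‖x‖ ≤ M :=
    hγc.isBounded.exists_pos_norm_le
  obtain ⟨d, hd0, hd⟩ : ∃ d > 0, ball z₀ d ⊆ Ω := Metric.isOpen_iff.1 hφ.isOpen z₀ hφ.mem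
  obtain ⟨ε', hε'0, hε'ε, hε'd⟩ : ∃ ε' > 0, ε' ≤ ε ∧ ε' ≤ d :=
    ⟨min ε d, lt_min hε hd0, min_le_left _ _, min_le_right _ _⟩
  obtain ⟨η, hη0, hη⟩ := hφ.exists_isPreconnected_subset_frontier (ε := ε' / 16) (by positivity)
  obtain ⟨e, he0, heε, heη⟩ : ∃ e > 0, e ≤ ε' / 16 ∧ e ≤ η / 16 :=
    ⟨min (ε' / 16) (η / 16), by positivity, min_le_left _ _, min_le_right _ _⟩
  have hcD : IsCompact (closure (ball (0 : ℂ) 1)) := hcl ▸ isCompact_closedBall _ _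
  obtain ⟨τ, hτ0, hτ⟩ :=
    Metric.uniformContinuousOn_iff.1 (hcD.uniformContinuousOn_of_continuous hφ.continuousOn) e he0
  have hexp_mem : ∀ s : ℂ, s.re ≤ 0 → Complex.exp s ∈ closure (ball (0 : ℂ) 1) := fun s hs => by
    rw [hcl, mem_closedBall_zero_iff, Complex.norm_exp]
    exact Real.exp_le_one_iff.2 hs
  have hφexp : ∀ s t : ℂ, s.re ≤ 0 → t.re ≤ 0 → ‖s - t‖ < τ →
      ‖φ (Complex.exp s) - φ (Complex.exp t)‖ < e := fun s t hs ht hst => by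
    rw [← dist_eq_norm]
    refine hτ _ (hexp_mem s hs) _ (hexp_mem t ht) ?_
    rw [dist_eq_norm]
    exact (Complex.norm_exp_sub_exp_le hs ht).trans_lt hst
  obtain ⟨Δ, hΔ0, hΔ1, hΔτ⟩ : ∃ Δ > 0, Δ ≤ 1 ∧ Δ ≤ τ / 4 :=
    ⟨min 1 (τ / 4), by positivity, min_le_left _ _, min_le_right _ _⟩
  obtain ⟨y, hy0, hyτ, hyM⟩ : ∃ y > 0, y ≤ τ / 2 ∧ y ≤ e ^ 2 * Δ / (4 * (M + 1) ^ 2) :=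
    ⟨min (τ / 2) (e ^ 2 * Δ / (4 * (M + 1) ^ 2)), by positivity, min_le_left _ _, min_le_right _ _⟩
  rw [le_div_iff₀ (by positivity)] at hyM
  obtain ⟨δ₀, hδ₀, hloc⟩ := hφ.exists_norm_sub_lt_of_norm_le (ρ := Real.exp (-y))
    (Real.exp_lt_one_iff.2 (by linarith)) he0
  refine ⟨min δ₀ (min e 1), by positivity, fun h f hh hδ hf => ?_⟩
  have hδ₀' : ∀ z ∈ frontier Ω, dist (h z) z < δ₀ := fun z hz =>
    (hδ z hz).trans_le (min_le_left _ _)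
  have hδe : ∀ z ∈ frontier Ω, dist (h z) z < e := fun z hz =>
    (hδ z hz).trans_le ((min_le_right _ _).trans (min_le_left _ _))
  have hδ1 : ∀ z ∈ frontier Ω, dist (h z) z < 1 := fun z hz =>
    (hδ z hz).trans_le ((min_le_right _ _).trans (min_le_right _ _))
  have hinn := hloc h f hh hδ₀' hf
  have hKc : IsCompact (h '' frontier Ω) := hγc.image_of_continuousOn hh
  have hfM : ∀ z ∈ ball (0 : ℂ) 1, ‖f z‖ ≤ M + 1 := fun z hz => by
    refine hf.norm_le_of_frontier (fun x hx => ?_) (hf.mapsTo hz)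
    obtain ⟨u, hu, rfl⟩ := frontier_connectedComponentIn_compl_subset hKc.isClosed z₀ hx
    have h1 := hδ1 u hu
    rw [dist_eq_norm] at h1
    linarith [norm_le_norm_add_norm_sub' (h u) u, hM u hu]
  have hball : ∀ z ∈ ball (0 : ℂ) 1, ‖f z - φ z‖ ≤ ε' / 2 + e := by
    intro z hz
    rcases le_or_gt ‖z‖ (Real.exp (-y)) with hzy | hzy
    · exact (hinn z hzy).le.trans (by linarith)
    have hz0 : z ≠ 0 := norm_pos_iff.1 ((Real.exp_pos _).trans hzy)
    set θ₀ := z.arg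
    set x := Real.log ‖z‖
    have hzexp : Complex.exp ⟨x, θ₀⟩ = z := by
      have : (⟨x, θ₀⟩ : ℂ) = Complex.log z := Complex.ext (Complex.log_re z).symm
        (Complex.log_im z).symm
      rw [this, Complex.exp_log hz0]
    have hx : x ∈ Ioo (-y) 0 :=
      ⟨(Real.lt_log_iff_exp_lt (norm_pos_iff.2 hz0)).2 hzy,
        Real.log_neg (norm_pos_iff.2 hz0) (mem_ball_zero_iff.1 hz)⟩
    have hre : ∀ (a b t : ℝ), ‖(⟨a, t⟩ : ℂ) - ⟨b, t⟩‖ = |a - b| := fun a b t => by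
      have : (⟨a, t⟩ : ℂ) - ⟨b, t⟩ = ((a - b : ℝ) : ℂ) := by apply Complex.ext <;> simp
      rw [this, Complex.norm_real, Real.norm_eq_abs]
    have him : ∀ (a s t : ℝ), ‖(⟨a, s⟩ : ℂ) - ⟨a, t⟩‖ = |s - t| := fun a s t => by
      have : (⟨a, s⟩ : ℂ) - ⟨a, t⟩ = ((s - t : ℝ) : ℂ) * Complex.I := by
        apply Complex.ext <;> simp
      rw [this, norm_mul, Complex.norm_real, Real.norm_eq_abs, Complex.norm_I, mul_one]
    set c := φ (Complex.exp ⟨-y, θ₀⟩)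
    have hφz : ‖φ z - c‖ < e := by
      rw [← hzexp]
      refine hφexp _ _ hx.2.le (by simp only; linarith) ?_
      rw [hre, abs_lt]
      constructor <;> linarith [hx.1, hx.2]
    have hz₀ : z₀ ∉ closedBall c (ε' / 2) := by
      intro hmem
      have hfr : φ (Complex.exp ⟨0, θ₀⟩) ∈ frontier Ω :=
        hφ.map_mem_frontier (by rw [Complex.norm_exp, Real.exp_zero])
      have h1 : φ (Complex.exp ⟨0, θ₀⟩) ∉ ball z₀ d := fun h => by
        rw [hφ.isOpen.frontier_eq] at hfr
        exact hfr.2 (hd h)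
      have h2 : ‖φ (Complex.exp ⟨0, θ₀⟩) - c‖ < e := by
        refine hφexp _ _ le_rfl (by simp only; linarith) ?_
        rw [hre, abs_lt]
        constructor <;> linarith
      rw [mem_ball, not_lt] at h1
      rw [mem_closedBall, dist_comm] at hmem
      rw [← dist_eq_norm] at h2
      linarith [dist_triangle (φ (Complex.exp ⟨0, θ₀⟩)) c z₀]
    have hfz := hf.norm_sub_le_of_arc (c := c) (M := M + 1) (x₀ := -y) (Δ := Δ) (θ₀ := θ₀)
      (e₁ := 2 * e) (e₂ := e) (r := ε' / 2) hKc (by linarith) hfM (by linarith) hΔ0 hΔ1 he0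
      (by linarith) ?_ ?_ (by linarith) hz₀ hx
    · rw [hzexp] at hfz
      have := norm_sub_le_norm_sub_add_norm_sub (f z) c (φ z)
      rw [norm_sub_rev c] at this
      linarith
    · intro θ hθ
      have h1 := hinn (Complex.exp ⟨-y, θ⟩) (by rw [Complex.norm_exp])
      have h2 : ‖φ (Complex.exp ⟨-y, θ⟩) - c‖ < e := by
        refine hφexp _ _ (by simp only; linarith) (by simp only; linarith) ?_
        rw [him]
        linarith
      have := norm_sub_le_norm_sub_add_norm_sub (f (Complex.exp ⟨-y, θ⟩))
        (φ (Complex.exp ⟨-y, θ⟩)) c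
      linarith
    · rintro _ ⟨a, ha, rfl⟩ _ ⟨b, hb, rfl⟩ hac hbc
      rw [mem_closedBall] at hac hbc
      have hab : dist a b < η := by
        have h1 := dist_triangle4 a (h a) (h b) b
        have h2 := dist_triangle_right (h a) (h b) c
        have h3 := hδe a ha
        have h4 := hδe b hb
        rw [dist_comm] at h3
        linarith
      obtain ⟨B, hBγ, hB, haB, hbB, hBa⟩ := hη a ha b hb hab
      refine ⟨h '' B, image_mono hBγ, hB.image _ (hh.mono hBγ), mem_image_of_mem _ haB,
        mem_image_of_mem _ hbB, ?_⟩
      rintro _ ⟨u, hu, rfl⟩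
      have h1 := hδe u (hBγ hu)
      have h2 : dist u a < ε' / 16 := hBa hu
      have h3 := hδe a ha
      rw [dist_comm] at h3
      have h4 := dist_triangle4 (h u) u a (h a)
      have h5 := dist_triangle (h u) (h a) c
      rw [mem_closedBall]
      linarith
  intro z hz
  have hle : ‖f z - φ z‖ ≤ ε' / 2 + e :=
    le_on_closure (f := fun z => ‖f z - φ z‖) (g := fun _ => ε' / 2 + e) hball
      (hf.continuousOn.sub hφ.continuousOn).norm continuousOn_const hz
  linarith

/-- Stability of normalized Riemann maps under small displacements of the boundary:
for every `ε > 0` there is `δ > 0` such that any `δ`-displacement `h` of `γ = ∂Ω`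
changes the normalized Riemann map of the component of the complement of `h(γ)`
containing `z₀` by less than `ε`, uniformly on the closed unit disc. -/
theorem riemann_map_stability
    (Ω : Set ℂ) (hΩ : IsLemniscateDomain Ω) (hbdd : Bornology.IsBounded Ω)
    (z₀ : ℂ) (hz₀ : z₀ ∈ Ω) (ε : ℝ) (hε : 0 < ε) :
    ∃ δ > 0, ∀ h : ℂ → ℂ,
      ContinuousOn h (frontier Ω) → Set.InjOn h (frontier Ω) →
      (∀ z ∈ frontier Ω, dist (h z) z < δ) →
      ∀ φ φh : ℂ → ℂ,
        (ContinuousOn φ (closure (ball (0 : ℂ) 1)) ∧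
         DifferentiableOn ℂ φ (ball (0 : ℂ) 1) ∧
         Set.InjOn φ (ball (0 : ℂ) 1) ∧
         φ '' ball (0 : ℂ) 1 = Ω ∧ φ 0 = z₀ ∧
         ∃ a : ℝ, 0 < a ∧ deriv φ 0 = (a : ℂ)) →
        (ContinuousOn φh (closure (ball (0 : ℂ) 1)) ∧
         DifferentiableOn ℂ φh (ball (0 : ℂ) 1) ∧
         Set.InjOn φh (ball (0 : ℂ) 1) ∧
         φh '' ball (0 : ℂ) 1 = connectedComponentIn (h '' frontier Ω)ᶜ z₀ ∧
         φh 0 = z₀ ∧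
         ∃ a : ℝ, 0 < a ∧ deriv φh 0 = (a : ℂ)) →
        ∀ z ∈ closure (ball (0 : ℂ) 1), ‖φ z - φh z‖ < ε := by
  by_cases hex : ∃ φ₀, IsNormalizedRiemannMap φ₀ Ω z₀
  · obtain ⟨φ₀, hφ₀⟩ := hex
    obtain ⟨δ, hδ, key⟩ := hφ₀.exists_norm_sub_lt (half_pos hε)
    refine ⟨δ, hδ, ?_⟩
    rintro h hh - hd φ φh ⟨h1, h2, h3, h4, h5, h6⟩ ⟨k1, k2, k3, k4, k5, k6⟩ z hz
    have hφ : IsNormalizedRiemannMap φ (connectedComponentIn (id '' frontier Ω)ᶜ z₀) z₀ := by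
      rw [image_id, connectedComponentIn_compl_frontier_eq hΩ.1 hφ₀.isPreconnected hz₀]
      exact ⟨h1, h2, h3, h4, h5, h6⟩
    have e1 := key id φ continuousOn_id (fun w _ => by simpa using hδ) hφ z hz
    have e2 := key h φh hh hd ⟨k1, k2, k3, k4, k5, k6⟩ z hz
    have e3 := norm_sub_le_norm_sub_add_norm_sub (φ z) (φ₀ z) (φh z)
    rw [norm_sub_rev (φ₀ z)] at e3
    linarith
  · refine ⟨1, one_pos, ?_⟩
    rintro h - - - φ φh ⟨h1, h2, h3, h4, h5, h6⟩
    exact absurd ⟨φ, h1, h2, h3, h4, h5, h6⟩ hex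

end
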